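/- arXiv:1502.03740 — 2 statements merged into one kernel-verified Lean document; each statement's English description precedes it below -/
import Mathlib

section
/- Let I, J ⊆ ℝ be intervals, E a Banach space, F = End(E), and G : I → L^∞_loc(J; F) ∩ L¹(J; F) a map continuous with respect to the supremum distance on functions J → F and of bounded variation V with respect to the L¹(J; F) norm. Set N = exp(sup_{t∈I} ‖G(t)‖_{L¹(J;F)}). Then for every locally absolutely continuous f : I → ℝ with f(I) ⊆ J, the function A(t) = f'(t) · G(t)(f(t)) is locally Bochner integrable on I, and every evolution operator X for A in E satisfies ‖X(t, s)^{±1}‖ ≤ N² exp(N^{3+2N} V) for all s ≤ t in I. -/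
open MeasureTheory Set intervalIntegral

/-- `f` is absolutely continuous on the set `s`: for every `ε > 0` there is `δ > 0` such
that for every finite family of non-overlapping subintervals of `s` of total length `< δ`,
the total variation of `f` over them is `< ε`. -/
def AbsolutelyContinuousOn (f : ℝ → ℝ) (s : Set ℝ) : Prop :=
  ∀ ε > (0 : ℝ), ∃ δ > (0 : ℝ), ∀ n : ℕ, ∀ u v : ℕ → ℝ,
    (∀ i < n, u i ∈ s ∧ v i ∈ s ∧ u i ≤ v i) →
    (∀ i < n, ∀ j < n, i ≠ j → Set.Ioo (u i) (v i) ∩ Set.Ioo (u j) (v j) = ∅) →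
    (∑ i ∈ Finset.range n, (v i - u i)) < δ →
    (∑ i ∈ Finset.range n, |f (v i) - f (u i)|) < ε

/-- `f` is locally absolutely continuous on the interval `I`: absolutely continuous on
every compact subinterval of `I`. -/
def LocallyAbsolutelyContinuousOn (f : ℝ → ℝ) (I : Set ℝ) : Prop :=
  ∀ a ∈ I, ∀ b ∈ I, AbsolutelyContinuousOn f (Set.Icc a b)

/-- `f'` is the derivative of `f` relative to `I`, in the convention of the paper:
it is the derivative at points of differentiability and `0` elsewhere. -/
def IsDerivWithinOf (f' f : ℝ → ℝ) (I : Set ℝ) : Prop :=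
  ∀ t ∈ I, (DifferentiableWithinAt ℝ f I t → HasDerivWithinAt f (f' t) I t) ∧
    (¬ DifferentiableWithinAt ℝ f I t → f' t = 0)

/-- `y ∈ L^∞_loc(J; E)`: `y` is Bochner measurable on `J` and essentially bounded on
every compact subinterval of `J`. -/
def LocEssBdd {E : Type*} [NormedAddCommGroup E] (y : ℝ → E) (J : Set ℝ) : Prop :=
  AEStronglyMeasurable y (volume.restrict J) ∧
  ∀ a ∈ J, ∀ b ∈ J, ∃ M : ℝ, ∀ᵐ t ∂(volume.restrict (Set.uIcc a b)), ‖y t‖ ≤ M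

/-- An evolution operator for `A` in `E` on the interval `I`: for each `s ∈ I`,
`X(·, s)` is a continuous operator solution of `X' = A ∘ X` with `X(s,s) = id`. -/
def IsEvolutionOperator {E : Type*} [NormedAddCommGroup E] [NormedSpace ℝ E]
    (I : Set ℝ) (A : ℝ → E →L[ℝ] E) (X : ℝ → ℝ → E →L[ℝ] E) : Prop :=
  ∀ s ∈ I, ContinuousOn (fun t => X t s) I ∧ X s s = ContinuousLinearMap.id ℝ E ∧
    ∀ u ∈ I, ∀ t ∈ I, X t s - X u s = ∫ τ in u..t, (A τ).comp (X τ s)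

/-- The set of partition sums defining the total variation of
`G : I → L¹(J; F)` with respect to the `L¹(J; F)` norm. -/
def l1VarSums {F : Type*} [NormedAddCommGroup F] (G : ℝ → ℝ → F) (I J : Set ℝ) : Set ℝ :=
  {v | ∃ n : ℕ, ∃ a : ℕ → ℝ, (∀ i ≤ n, a i ∈ I) ∧ (∀ i < n, a i < a (i + 1)) ∧
    v = ∑ i ∈ Finset.range n, ∫ u in J, ‖G (a (i + 1)) u - G (a i) u‖}

/-!
For a coefficient `g` that does not depend on time, `X' = f' g(f) X` is solved by `X = Y ∘ f`, where
`Y' = g Y`: only the values of `f` matter, never its variation. Multiplying by `W ∘ f`, where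
`W = Y⁻¹`, is therefore a moving frame in which the equation is trivial.

For varying `G`, cut `[s, t]` at `s = t₀ < ⋯ < tₙ = t` and use the frame of `gᵢ = G(tᵢ)` on the
`i`-th piece. Grönwall's inequality there leaves a rate of at most
`N² |f'| sup_{τ, u} ‖G(τ)(u) - gᵢ(u)‖`, and passing from one frame to the next changes norms by a
factor of at most `exp(N² ‖gᵢ₊₁ - gᵢ‖_{L¹})`, again by Grönwall. The factors multiply up to
`exp(N² V)`, the first and the last frame cost a factor `N` each, and the error from the rates
vanishes with the mesh. Every estimate holds in both directions, which also bounds the inverse.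
-/

section

open Filter Topology

section AbsoluteContinuity

variable {X Y Z F : Type*} [PseudoMetricSpace X] [PseudoMetricSpace Y] [PseudoMetricSpace Z]
  [NormedAddCommGroup F] [NormedSpace ℝ F] {a b : ℝ}

theorem absolutelyContinuousOnInterval_of_dist_le_add {f : ℝ → X} {g : ℝ → Y} {h : ℝ → Z}
    {K L : ℝ} (hg : AbsolutelyContinuousOnInterval g a b)
    (hh : AbsolutelyContinuousOnInterval h a b)
    (hfgh : ∀ x ∈ uIcc a b, ∀ y ∈ uIcc a b,
      dist (f x) (f y) ≤ K * dist (g x) (g y) + L * dist (h x) (h y)) :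
    AbsolutelyContinuousOnInterval f a b := by
  refine squeeze_zero' (.of_forall fun E ↦ Finset.sum_nonneg fun i _ ↦ dist_nonneg) ?_
    (by simpa using (Tendsto.const_mul K hg).add (Tendsto.const_mul L hh))
  filter_upwards [mem_inf_of_right (mem_principal_self _)] with E hE
  simp only [Finset.mul_sum, ← Finset.sum_add_distrib]
  exact Finset.sum_le_sum fun i hi ↦ hfgh _ (hE.1 i hi).1 _ (hE.1 i hi).2

theorem absolutelyContinuousOnInterval_of_dist_le {f : ℝ → X} {g : ℝ → Y} {K : ℝ}
    (hg : AbsolutelyContinuousOnInterval g a b)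
    (hfg : ∀ x ∈ uIcc a b, ∀ y ∈ uIcc a b, dist (f x) (f y) ≤ K * dist (g x) (g y)) :
    AbsolutelyContinuousOnInterval f a b :=
  absolutelyContinuousOnInterval_of_dist_le_add (L := 0) hg hg
    fun x hx y hy ↦ by simpa using hfg x hx y hy

theorem absolutelyContinuousOnInterval_lipschitzOnWith_comp {φ : X → Y} {f : ℝ → X} {s : Set X}
    {K : NNReal} (hφ : LipschitzOnWith K φ s) (hf : AbsolutelyContinuousOnInterval f a b)
    (hfs : MapsTo f (uIcc a b) s) :
    AbsolutelyContinuousOnInterval (fun x ↦ φ (f x)) a b :=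
  absolutelyContinuousOnInterval_of_dist_le hf
    fun _ hx _ hy ↦ hφ.dist_le_mul _ (hfs hx) _ (hfs hy)

theorem absolutelyContinuousOnInterval_integral {p : ℝ → F} (hp : IntervalIntegrable p volume a b) :
    AbsolutelyContinuousOnInterval (fun x ↦ ∫ v in a..x, p v) a b := by
  refine absolutelyContinuousOnInterval_of_dist_le (K := 1)
    (hp.norm.absolutelyContinuousOnInterval_intervalIntegral left_mem_uIcc) fun x hx y hy ↦ ?_
  have hpx : IntervalIntegrable p volume a x := hp.mono_set (uIcc_subset_uIcc left_mem_uIcc hx)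
  have hpy : IntervalIntegrable p volume a y := hp.mono_set (uIcc_subset_uIcc left_mem_uIcc hy)
  rw [dist_eq_norm, dist_eq_norm, integral_interval_sub_left hpx hpy,
    integral_interval_sub_left hpx.norm hpy.norm, one_mul]
  exact norm_integral_le_abs_integral_norm

end AbsoluteContinuity

/-- `P` is an absolutely continuous primitive of `p` between `a` and `b`, which may come in either
order. The a.e. derivative and its integrability are recorded because they do not follow from
absolute continuity in a general Banach space. -/
structure IsACPrimitive {F : Type*} [NormedAddCommGroup F] [NormedSpace ℝ F] (P p : ℝ → F)
    (a b : ℝ) : Prop where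
  absolutelyContinuousOnInterval : AbsolutelyContinuousOnInterval P a b
  intervalIntegrable : IntervalIntegrable p volume a b
  ae_hasDerivAt : ∀ᵐ x, x ∈ uIcc a b → HasDerivAt P (p x) x

namespace IsACPrimitive

section NormedSpace

variable {F : Type*} [NormedAddCommGroup F] [NormedSpace ℝ F] {P p : ℝ → F} {a b c d : ℝ}

theorem continuousOn (h : IsACPrimitive P p a b) : ContinuousOn P (uIcc a b) :=
  h.absolutelyContinuousOnInterval.continuousOn

theorem mono (h : IsACPrimitive P p a b) (hcd : uIcc c d ⊆ uIcc a b) : IsACPrimitive P p c d where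
  absolutelyContinuousOnInterval := h.absolutelyContinuousOnInterval.mono hcd
  intervalIntegrable := h.intervalIntegrable.mono_set hcd
  ae_hasDerivAt := h.ae_hasDerivAt.mono fun _ hx hxcd ↦ hx (hcd hxcd)

theorem symm (h : IsACPrimitive P p a b) : IsACPrimitive P p b a :=
  h.mono (uIcc_comm b a).subset

protected theorem const (x : F) : IsACPrimitive (fun _ ↦ x) 0 a b where
  absolutelyContinuousOnInterval :=
    ((LipschitzWith.const x).lipschitzOnWith (K := 0)).absolutelyContinuousOnInterval
  intervalIntegrable := _root_.intervalIntegrable_const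
  ae_hasDerivAt := .of_forall fun y _ ↦ hasDerivAt_const y x

protected theorem neg (h : IsACPrimitive P p a b) : IsACPrimitive (-P) (-p) a b where
  absolutelyContinuousOnInterval := h.absolutelyContinuousOnInterval.neg
  intervalIntegrable := h.intervalIntegrable.neg
  ae_hasDerivAt := h.ae_hasDerivAt.mono fun _ hx hxab ↦ (hx hxab).neg

theorem sub_const (h : IsACPrimitive P p a b) (x : F) : IsACPrimitive (fun y ↦ P y - x) p a b where
  absolutelyContinuousOnInterval :=
    absolutelyContinuousOnInterval_of_dist_le (K := 1) h.absolutelyContinuousOnInterval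
      fun _ _ _ _ ↦ by simp
  intervalIntegrable := h.intervalIntegrable
  ae_hasDerivAt := h.ae_hasDerivAt.mono fun _ hy hyab ↦ (hy hyab).sub_const x

theorem of_eq_add_integral [CompleteSpace F] (hp : IntervalIntegrable p volume a b)
    (hP : ∀ x ∈ uIcc a b, P x = P a + ∫ v in a..x, p v) : IsACPrimitive P p a b where
  absolutelyContinuousOnInterval :=
    absolutelyContinuousOnInterval_of_dist_le (K := 1) (absolutelyContinuousOnInterval_integral hp)
      fun x hx y hy ↦ by simp [hP x hx, hP y hy]
  intervalIntegrable := hp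
  ae_hasDerivAt := by
    filter_upwards [hp.ae_hasDerivAt_integral, Measure.ae_ne volume (min a b),
      Measure.ae_ne volume (max a b)] with x hx hmin hmax hxab
    refine ((hx hxab a left_mem_uIcc).const_add (P a)).congr_of_eventuallyEq ?_
    filter_upwards [Icc_mem_nhds (hxab.1.lt_of_ne' hmin) (hxab.2.lt_of_ne hmax)] with y hy
      using hP y hy

theorem integral_eq_sub [CompleteSpace F] (h : IsACPrimitive P p a b) :
    ∫ v in a..b, p v = P b - P a := by
  obtain ⟨C, hC⟩ : ∃ C, ∀ x ∈ uIcc a b, P x - ∫ v in a..x, p v = C := by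
    refine (h.absolutelyContinuousOnInterval.sub (absolutelyContinuousOnInterval_integral
      h.intervalIntegrable)).const_of_ae_hasDerivAt_zero ?_
    filter_upwards [h.ae_hasDerivAt, h.intervalIntegrable.ae_hasDerivAt_integral]
      with x hPx hpx hxab
    simpa using (hPx hxab).sub (hpx hxab a left_mem_uIcc)
  have ha : P a = C := by simpa using hC a left_mem_uIcc
  rw [ha, ← hC b right_mem_uIcc, sub_sub_cancel]

end NormedSpace

theorem mul {R : Type*} [NormedRing R] [NormedAlgebra ℝ R] {P p Q q : ℝ → R} {a b : ℝ}
    (hP : IsACPrimitive P p a b) (hQ : IsACPrimitive Q q a b) :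
    IsACPrimitive (P * Q) (p * Q + P * q) a b where
  absolutelyContinuousOnInterval := by
    obtain ⟨C, hC⟩ := hP.absolutelyContinuousOnInterval.exists_bound
    obtain ⟨D, hD⟩ := hQ.absolutelyContinuousOnInterval.exists_bound
    refine absolutelyContinuousOnInterval_of_dist_le_add (K := D) (L := C)
      hP.absolutelyContinuousOnInterval hQ.absolutelyContinuousOnInterval fun x hx y hy ↦ ?_
    simp only [dist_eq_norm, Pi.mul_apply]
    calc ‖P x * Q x - P y * Q y‖ = ‖(P x - P y) * Q x + P y * (Q x - Q y)‖ := by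
          congr 1; noncomm_ring
      _ ≤ ‖P x - P y‖ * ‖Q x‖ + ‖P y‖ * ‖Q x - Q y‖ :=
          (norm_add_le _ _).trans (add_le_add (norm_mul_le _ _) (norm_mul_le _ _))
      _ ≤ D * ‖P x - P y‖ + C * ‖Q x - Q y‖ := by
          rw [mul_comm D]
          gcongr
          exacts [hD x hx, hC y hy]
  intervalIntegrable := (hP.intervalIntegrable.mul_continuousOn hQ.continuousOn).add
    (hQ.intervalIntegrable.continuousOn_mul hP.continuousOn)
  ae_hasDerivAt := by
    filter_upwards [hP.ae_hasDerivAt, hQ.ae_hasDerivAt] with x hPx hQx hx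
      using (hPx hx).mul (hQx hx)

theorem mul_const {R : Type*} [NormedRing R] [NormedAlgebra ℝ R] {P p : ℝ → R} {a b : ℝ}
    (hP : IsACPrimitive P p a b) (x : R) :
    IsACPrimitive (fun u ↦ P u * x) (fun u ↦ p u * x) a b := by
  simpa [Pi.mul_def] using hP.mul (IsACPrimitive.const x)

protected theorem exp {P p : ℝ → ℝ} {a b : ℝ} (hP : IsACPrimitive P p a b) :
    IsACPrimitive (fun x ↦ Real.exp (P x)) (fun x ↦ Real.exp (P x) * p x) a b where
  absolutelyContinuousOnInterval := by
    obtain ⟨C, hC⟩ := hP.absolutelyContinuousOnInterval.exists_bound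
    obtain ⟨K, hK⟩ := (Real.contDiff_exp (n := 1)).contDiffOn.exists_lipschitzOnWith one_ne_zero
      (convex_Icc (-C) C) isCompact_Icc
    exact absolutelyContinuousOnInterval_lipschitzOnWith_comp hK hP.absolutelyContinuousOnInterval
      fun x hx ↦ abs_le.1 (hC x hx)
  intervalIntegrable := hP.intervalIntegrable.continuousOn_mul hP.continuousOn.rexp
  ae_hasDerivAt := hP.ae_hasDerivAt.mono fun _ hx hxab ↦ (hx hxab).exp

theorem le_of_ae_nonneg {P p : ℝ → ℝ} {a b : ℝ} (hP : IsACPrimitive P p a b) (hab : a ≤ b)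
    (hp : ∀ᵐ x, x ∈ Icc a b → 0 ≤ p x) : P a ≤ P b := by
  rw [← sub_nonneg, ← hP.integral_eq_sub]
  refine integral_nonneg_of_ae_restrict hab ?_
  rwa [EventuallyLE, ae_restrict_iff' measurableSet_Icc]

end IsACPrimitive

/-- `ExpClose r x y` says `|log x - log y| ≤ r` when `x` and `y` are positive; this form also
makes sense when they vanish. It packages two-sided growth estimates. -/
def ExpClose (r x y : ℝ) : Prop :=
  x ≤ y * Real.exp r ∧ y ≤ x * Real.exp r

namespace ExpClose

variable {r r' x y z : ℝ}

theorem of_nonneg (hx : 0 ≤ x) (hr : 0 ≤ r) : ExpClose r x x :=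
  have hle := le_mul_of_one_le_right hx (Real.one_le_exp hr)
  ⟨hle, hle⟩

theorem symm (h : ExpClose r x y) : ExpClose r y x :=
  And.symm h

theorem mono (hx : 0 ≤ x) (hy : 0 ≤ y) (h : ExpClose r x y) (hr : r ≤ r') :
    ExpClose r' x y :=
  ⟨h.1.trans (by gcongr), h.2.trans (by gcongr)⟩

theorem trans (hxy : ExpClose r x y) (hyz : ExpClose r' y z) : ExpClose (r + r') x z := by
  constructor
  · calc x ≤ y * Real.exp r := hxy.1
      _ ≤ z * Real.exp r' * Real.exp r := by gcongr; exact hyz.1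
      _ = z * Real.exp (r + r') := by rw [Real.exp_add]; ring
  · calc z ≤ y * Real.exp r' := hyz.2
      _ ≤ x * Real.exp r * Real.exp r' := by gcongr; exact hxy.2
      _ = x * Real.exp (r + r') := by rw [Real.exp_add]; ring

theorem sum_range {z r : ℕ → ℝ} {n : ℕ} (h : ∀ i < n, ExpClose (r i) (z (i + 1)) (z i)) :
    ExpClose (∑ i ∈ Finset.range n, r i) (z n) (z 0) := by
  induction n with
  | zero => simp [ExpClose]
  | succ n ih =>
    rw [Finset.sum_range_succ, add_comm]
    exact (h n n.lt_succ_self).trans (ih fun i hi ↦ h i (hi.trans n.lt_succ_self))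

theorem of_tendsto {ι : Type*} {l : Filter ι} [l.NeBot] {ρ : ι → ℝ} (hρ : Tendsto ρ l (𝓝 r))
    (h : ∀ᶠ i in l, ExpClose (ρ i) x y) : ExpClose r x y :=
  have hexp := (Real.continuous_exp.tendsto r).comp hρ
  ⟨ge_of_tendsto (hexp.const_mul y) (h.mono fun _ ↦ And.left),
    ge_of_tendsto (hexp.const_mul x) (h.mono fun _ ↦ And.right)⟩

end ExpClose

section Gronwall

variable {F : Type*} [NormedAddCommGroup F] [NormedSpace ℝ F]

theorem abs_deriv_norm_le {P : ℝ → F} {p : F} {d x : ℝ} (hP : HasDerivAt P p x)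
    (hd : HasDerivAt (fun y ↦ ‖P y‖) d x) : |d| ≤ ‖p‖ := by
  refine le_of_tendsto_of_tendsto' hd.tendsto_slope.abs hP.tendsto_slope.norm fun y ↦ ?_
  rw [slope_def_module, slope_def_module, norm_smul, smul_eq_mul, abs_mul, Real.norm_eq_abs]
  gcongr
  exact abs_norm_sub_norm_le _ _

namespace IsACPrimitive

theorem norm {P p : ℝ → F} {a b : ℝ} (hP : IsACPrimitive P p a b) :
    IsACPrimitive (fun x ↦ ‖P x‖) (deriv fun x ↦ ‖P x‖) a b := by
  have hAC : AbsolutelyContinuousOnInterval (fun x ↦ ‖P x‖) a b :=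
    absolutelyContinuousOnInterval_lipschitzOnWith_comp (lipschitzWith_one_norm.lipschitzOnWith)
      hP.absolutelyContinuousOnInterval (mapsTo_univ _ _)
  exact ⟨hAC, hAC.intervalIntegrable_deriv,
    hAC.ae_differentiableAt.mono fun _ hx hxab ↦ (hx hxab).hasDerivAt⟩

/-- Under `|u'| ≤ φ u` the function `u exp (-∫ φ)` decreases and `u exp (∫ φ)` increases. -/
theorem expClose {u u' φ : ℝ → ℝ} {a b : ℝ} (hu : IsACPrimitive u u' a b) (hab : a ≤ b)
    (hφ : IntervalIntegrable φ volume a b)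
    (hu' : ∀ᵐ x, x ∈ Icc a b → |u' x| ≤ φ x * u x) :
    ExpClose (∫ x in a..b, φ x) (u b) (u a) := by
  have hΦ : IsACPrimitive (fun x ↦ ∫ v in a..x, φ v) φ a b := .of_eq_add_integral hφ (by simp)
  have hdecr := (hu.mul hΦ.neg.exp).neg.le_of_ae_nonneg hab <| hu'.mono fun x hx hxab ↦ by
    have := le_of_abs_le (hx hxab)
    simp only [Pi.neg_apply, Pi.add_apply, Pi.mul_apply]
    nlinarith [Real.exp_pos (-∫ v in a..x, φ v)]
  have hincr := (hu.mul hΦ.exp).le_of_ae_nonneg hab <| hu'.mono fun x hx hxab ↦ by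
    have := neg_le_of_abs_le (hx hxab)
    simp only [Pi.add_apply, Pi.mul_apply]
    nlinarith [Real.exp_pos (∫ v in a..x, φ v)]
  simp only [Pi.neg_apply, Pi.mul_apply, integral_same, Real.exp_zero, inv_one, mul_one,
    neg_le_neg_iff, Real.exp_neg] at hdecr hincr
  exact ⟨by rwa [← div_eq_mul_inv, div_le_iff₀ (Real.exp_pos _)] at hdecr, hincr⟩

theorem expClose_norm {P p : ℝ → F} {φ : ℝ → ℝ} {a b : ℝ} (hP : IsACPrimitive P p a b)
    (hφ : IntervalIntegrable φ volume a b)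
    (hp : ∀ᵐ x, x ∈ uIcc a b → ‖p x‖ ≤ φ x * ‖P x‖) :
    ExpClose |∫ x in a..b, φ x| ‖P b‖ ‖P a‖ := by
  wlog hab : a ≤ b generalizing a b
  · rw [integral_symm, abs_neg]
    exact (this hP.symm hφ.symm (by rwa [uIcc_comm]) (le_of_not_ge hab)).symm
  refine ExpClose.mono (norm_nonneg _) (norm_nonneg _) (hP.norm.expClose hab hφ ?_)
    (le_abs_self _)
  filter_upwards [hp, hP.ae_hasDerivAt, hP.norm.ae_hasDerivAt] with x hpx hPx hnx hxab
  rw [← uIcc_of_le hab] at hxab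
  exact (abs_deriv_norm_le (hPx hxab) (hnx hxab)).trans (hpx hxab)

end IsACPrimitive

end Gronwall

section NullSets

theorem addHaar_eq_zero_of_image_eq_zero {E : Type*} [NormedAddCommGroup E] [NormedSpace ℝ E]
    [FiniteDimensional ℝ E] [MeasurableSpace E] [BorelSpace E] (μ : Measure E)
    [μ.IsAddHaarMeasure] {f : E → E} {f' : E → E →L[ℝ] E} {s : Set E}
    (hf' : ∀ x ∈ s, HasFDerivWithinAt f (f' x) s x) (hdet : ∀ x ∈ s, (f' x).det ≠ 0)
    (hs : μ (f '' s) = 0) : μ s = 0 := by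
  rcases s.eq_empty_or_nonempty with rfl | hne
  · exact measure_empty
  have hδ (A : E →L[ℝ] E) : ∃ δ : NNReal, δ ≠ 0 ∧
      (A.det ≠ 0 → ∀ t, ApproximatesLinearOn f A t δ → μ (f '' t) = 0 → μ t = 0) := by
    by_cases hA : A.det = 0
    · exact ⟨1, one_ne_zero, fun h ↦ absurd hA h⟩
    obtain ⟨m, hm0, hm⟩ := ENNReal.lt_iff_exists_nnreal_btwn.1
      (ENNReal.ofReal_pos.2 (abs_pos.2 hA))
    obtain ⟨δ, hδ, hδ0⟩ :=
      ((mul_le_addHaar_image_of_lt_det μ A hm).and self_mem_nhdsWithin).exists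
    refine ⟨δ, pos_iff_ne_zero.1 hδ0, fun _ t ht ht0 ↦ ?_⟩
    have hmt : (m : ENNReal) * μ t ≤ 0 := (hδ t f ht).trans ht0.le
    exact (mul_eq_zero.1 (le_zero_iff.1 hmt)).resolve_left hm0.ne'
  choose δ hδ0 hδ using hδ
  obtain ⟨t, A, -, -, hst, hA, hAf'⟩ :=
    exists_partition_approximatesLinearOn_of_hasFDerivWithinAt f s f' hf' δ hδ0
  have hpiece (n : ℕ) : μ (s ∩ t n) = 0 := by
    obtain ⟨y, hy, hAy⟩ := hAf' hne n
    exact hδ _ (hAy ▸ hdet y hy) _ (hA n)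
      (measure_mono_null (image_mono inter_subset_left) hs)
  exact measure_mono_null (by rw [← inter_iUnion]; exact subset_inter Subset.rfl hst)
    (measure_iUnion_null hpiece)

theorem ae_mem_imp_forall_hasDerivAt_eq_zero (f : ℝ → ℝ) {B : Set ℝ} (hB : volume B = 0) :
    ∀ᵐ x, f x ∈ B → ∀ d, HasDerivAt f d x → d = 0 := by
  have hnull : volume {x | f x ∈ B ∧ DifferentiableAt ℝ f x ∧ deriv f x ≠ 0} = 0 :=
    addHaar_eq_zero_of_image_eq_zero volume
      (fun x hx ↦ hx.2.1.hasDerivAt.hasFDerivAt.hasFDerivWithinAt)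
      (fun x hx ↦ by rw [ContinuousLinearMap.det_toSpanSingleton]; exact hx.2.2)
      (measure_mono_null (image_subset_iff.2 fun x hx ↦ hx.1) hB)
  filter_upwards [measure_eq_zero_iff_ae_notMem.1 hnull] with x hx hxB d hd
  by_contra hd0
  exact hx ⟨hxB, hd.differentiableAt, hd.deriv ▸ hd0⟩

theorem IsACPrimitive.smul_comp_ae_eq {F : Type*} [NormedAddCommGroup F] [NormedSpace ℝ F]
    {f f' : ℝ → ℝ} {a b : ℝ} (hf : IsACPrimitive f f' a b) {s : Set ℝ} {g g' : ℝ → F}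
    (hfs : MapsTo f (uIcc a b) s) (hgg' : ∀ᵐ u, u ∈ s → g u = g' u) :
    ∀ᵐ x, x ∈ uIcc a b → f' x • g (f x) = f' x • g' (f x) := by
  filter_upwards [hf.ae_hasDerivAt, ae_mem_imp_forall_hasDerivAt_eq_zero f hgg'] with x hfx hx hxab
  by_cases hg : g (f x) = g' (f x)
  · rw [hg]
  · rw [hx (fun h ↦ hg (h (hfs hxab))) _ (hfx hxab), zero_smul, zero_smul]

end NullSets

section ChainRule

variable {F : Type*} [NormedAddCommGroup F] [NormedSpace ℝ F]

theorem lipschitzWith_of_isACPrimitive [CompleteSpace F] {P p : ℝ → F} {M : NNReal}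
    (hP : ∀ a b, IsACPrimitive P p a b) (hM : ∀ u, ‖p u‖ ≤ M) : LipschitzWith M P :=
  .of_dist_le_mul fun u v ↦ by
    rw [dist_eq_norm, ← (hP v u).integral_eq_sub, Real.dist_eq]
    exact norm_integral_le_of_norm_le_const fun x _ ↦ hM x

theorem ae_hasDerivAt_of_isACPrimitive {P p : ℝ → F} (hP : ∀ a b, IsACPrimitive P p a b) :
    ∀ᵐ u, HasDerivAt P (p u) u := by
  filter_upwards [ae_all_iff.2 fun n : ℕ ↦ (hP (-n) n).ae_hasDerivAt] with u hu
  obtain ⟨n, hn⟩ := exists_nat_ge |u|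
  exact hu n (Icc_subset_uIcc (abs_le.1 hn))

theorem hasDerivAt_lipschitzWith_comp_zero {P : ℝ → F} {M : NNReal} (hP : LipschitzWith M P)
    {f : ℝ → ℝ} {x : ℝ} (hf : HasDerivAt f 0 x) : HasDerivAt (fun y ↦ P (f y)) 0 x := by
  rw [hasDerivAt_iff_isLittleO] at hf ⊢
  simp only [smul_zero, sub_zero] at hf ⊢
  refine Asymptotics.IsBigO.trans_isLittleO (.of_bound M (.of_forall fun y ↦ ?_)) hf
  simpa only [dist_eq_norm] using hP.dist_le_mul (f y) (f x)

theorem IsACPrimitive.smul_comp_intervalIntegrable {f f' : ℝ → ℝ} {a b M : ℝ}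
    (hf : IsACPrimitive f f' a b) {p : ℝ → F} (hp : StronglyMeasurable p)
    (hM : ∀ u, ‖p u‖ ≤ M) : IntervalIntegrable (fun x ↦ f' x • p (f x)) volume a b := by
  have hfm : AEMeasurable f (volume.restrict (uIoc a b)) :=
    (hf.continuousOn.mono uIoc_subset_uIcc).aemeasurable measurableSet_uIoc
  refine (hf.intervalIntegrable.norm.const_mul M).mono_fun'
    (hf.intervalIntegrable.aestronglyMeasurable_restrict_uIoc.smul
      (hp.aestronglyMeasurable.comp_aemeasurable hfm)) (.of_forall fun x ↦ ?_)
  simpa only [norm_smul, mul_comm M] using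
    mul_le_mul_of_nonneg_left (hM (f x)) (norm_nonneg (f' x))

/-- Where `P` fails to be differentiable at `f x`, the derivative of `f` vanishes. -/
theorem IsACPrimitive.comp [CompleteSpace F] {P p : ℝ → F} {M : ℝ}
    (hP : ∀ a b, IsACPrimitive P p a b) (hp : StronglyMeasurable p) (hM : ∀ u, ‖p u‖ ≤ M)
    {f f' : ℝ → ℝ} {a b : ℝ} (hf : IsACPrimitive f f' a b) :
    IsACPrimitive (fun x ↦ P (f x)) (fun x ↦ f' x • p (f x)) a b := by
  lift M to NNReal using (norm_nonneg _).trans (hM 0)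
  have hLip : LipschitzWith M P := lipschitzWith_of_isACPrimitive hP hM
  refine ⟨absolutelyContinuousOnInterval_lipschitzOnWith_comp hLip.lipschitzOnWith
    hf.absolutelyContinuousOnInterval (mapsTo_univ _ _), hf.smul_comp_intervalIntegrable hp hM, ?_⟩
  filter_upwards [hf.ae_hasDerivAt,
    ae_mem_imp_forall_hasDerivAt_eq_zero f (ae_hasDerivAt_of_isACPrimitive hP)] with x hfx hx hxab
  by_cases hPx : HasDerivAt P (p (f x)) (f x)
  · exact hPx.scomp x (hfx hxab)
  · have hf'x : f' x = 0 := hx hPx _ (hfx hxab)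
    simpa [hf'x] using hasDerivAt_lipschitzWith_comp_zero hLip (hf'x ▸ hfx hxab)

end ChainRule

theorem intervalIntegrable_of_forall_norm_le {F : Type*} [NormedAddCommGroup F]
    {g : ℝ → F} {M : ℝ} (hg : StronglyMeasurable g)
    (hM : ∀ u, ‖g u‖ ≤ M) (a b : ℝ) : IntervalIntegrable g volume a b :=
  (_root_.intervalIntegrable_const (c := M)).mono_fun' hg.aestronglyMeasurable (.of_forall hM)

section LinearODE

variable {F : Type*} [NormedAddCommGroup F] [NormedSpace ℝ F]

theorem stronglyMeasurable_clm_apply {B : ℝ → F →L[ℝ] F} (hB : StronglyMeasurable B) {y : ℝ → F}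
    (hy : Continuous y) : StronglyMeasurable fun v ↦ B v (y v) :=
  isBoundedBilinearMap_apply.continuous.comp_stronglyMeasurable (hB.prodMk hy.stronglyMeasurable)

/-- The `n`-th term of the Neumann series `∑ₙ Tⁿ x₀` of the Volterra operator
`(T y) t = ∫₀ᵗ B v (y v) dv`. -/
noncomputable def volterraTerm (B : ℝ → F →L[ℝ] F) (x₀ : F) : ℕ → ℝ → F
  | 0, _ => x₀
  | n + 1, t => ∫ v in 0..t, B v (volterraTerm B x₀ n v)

variable {B : ℝ → F →L[ℝ] F} {M : ℝ}

theorem continuous_volterraTerm (hB : StronglyMeasurable B) (hM : ∀ u, ‖B u‖ ≤ M) (x₀ : F)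
    (n : ℕ) : Continuous (volterraTerm B x₀ n) := by
  induction n with
  | zero => exact continuous_const
  | succ n ih =>
    refine continuous_primitive (fun a b ↦ ?_) 0
    exact ((ih.norm.const_mul M).intervalIntegrable a b).mono_fun'
      (stronglyMeasurable_clm_apply hB ih).aestronglyMeasurable
      (.of_forall fun v ↦ (B v).le_of_opNorm_le (hM v) _)

theorem norm_volterraTerm_le (hM : ∀ u, ‖B u‖ ≤ M) (x₀ : F) (n : ℕ) (t : ℝ) :
    ‖volterraTerm B x₀ n t‖ ≤ ‖x₀‖ * ((M * |t|) ^ n / n.factorial) := by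
  induction n generalizing t with
  | zero => simp [volterraTerm]
  | succ n ih =>
    have hbound (v : ℝ) : ‖B v (volterraTerm B x₀ n v)‖ ≤
        ‖x₀‖ * M ^ (n + 1) / n.factorial * |v| ^ n :=
      calc ‖B v (volterraTerm B x₀ n v)‖ ≤ M * ‖volterraTerm B x₀ n v‖ :=
            (B v).le_of_opNorm_le (hM v) _
        _ ≤ M * (‖x₀‖ * ((M * |v|) ^ n / n.factorial)) := by
            gcongr
            exacts [(norm_nonneg _).trans (hM 0), ih v]
        _ = ‖x₀‖ * M ^ (n + 1) / n.factorial * |v| ^ n := by ring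
    calc ‖volterraTerm B x₀ (n + 1) t‖
        ≤ ∫ v in uIoc 0 t, ‖x₀‖ * M ^ (n + 1) / n.factorial * |v| ^ n := by
          rw [volterraTerm, norm_intervalIntegral_eq]
          refine norm_integral_le_of_norm_le ?_ (.of_forall hbound)
          exact ((by fun_prop : Continuous _).intervalIntegrable 0 t).def'
      _ = ‖x₀‖ * ((M * |t|) ^ (n + 1) / (n + 1).factorial) := by
          have hpow : ∫ v in uIoc 0 t, |v| ^ n = |t| ^ (n + 1) / (n + 1) := by
            simpa using integral_pow_abs_sub_uIoc (a := 0) (b := t) n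
          rw [MeasureTheory.integral_const_mul, hpow, Nat.factorial_succ]
          push_cast
          field_simp
          rw [mul_pow, mul_assoc]

theorem norm_volterraTerm_le_of_abs_le (hM : ∀ u, ‖B u‖ ≤ M) (x₀ : F) (n : ℕ) {t T : ℝ}
    (ht : |t| ≤ T) : ‖volterraTerm B x₀ n t‖ ≤ ‖x₀‖ * ((M * T) ^ n / n.factorial) := by
  have hM0 : 0 ≤ M := (norm_nonneg _).trans (hM 0)
  exact (norm_volterraTerm_le hM x₀ n t).trans (by gcongr)

theorem hasSum_volterraTerm [CompleteSpace F] (hM : ∀ u, ‖B u‖ ≤ M) (x₀ : F) (t : ℝ) :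
    HasSum (volterraTerm B x₀ · t) (∑' n, volterraTerm B x₀ n t) :=
  (Summable.of_norm_bounded ((Real.summable_pow_div_factorial (M * |t|)).mul_left ‖x₀‖)
    fun n ↦ norm_volterraTerm_le_of_abs_le hM x₀ n le_rfl).hasSum

theorem continuous_tsum_volterraTerm [CompleteSpace F] (hB : StronglyMeasurable B)
    (hM : ∀ u, ‖B u‖ ≤ M) (x₀ : F) : Continuous fun t ↦ ∑' n, volterraTerm B x₀ n t := by
  refine continuous_iff_continuousAt.2 fun t ↦ ?_
  have hcont : ContinuousOn (fun t ↦ ∑' n, volterraTerm B x₀ n t) (Icc (-(|t| + 1)) (|t| + 1)) :=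
    continuousOn_tsum (fun n ↦ (continuous_volterraTerm hB hM x₀ n).continuousOn)
      ((Real.summable_pow_div_factorial (M * (|t| + 1))).mul_left ‖x₀‖)
      fun n s hs ↦ norm_volterraTerm_le_of_abs_le hM x₀ n (abs_le.2 hs)
  exact hcont.continuousAt (Icc_mem_nhds (by linarith [neg_abs_le t]) (by linarith [le_abs_self t]))

theorem exists_continuous_eq_add_integral [CompleteSpace F] (hB : StronglyMeasurable B)
    (hM : ∀ u, ‖B u‖ ≤ M) (x₀ : F) :
    ∃ y : ℝ → F, Continuous y ∧ ∀ u, y u = x₀ + ∫ v in 0..u, B v (y v) := by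
  refine ⟨_, continuous_tsum_volterraTerm hB hM x₀, fun u ↦ ?_⟩
  have hintegral : HasSum (fun n ↦ volterraTerm B x₀ (n + 1) u)
      (∫ v in 0..u, B v (∑' n, volterraTerm B x₀ n v)) := by
    refine hasSum_integral_of_dominated_convergence
      (fun n _ ↦ M * (‖x₀‖ * ((M * |u|) ^ n / n.factorial)))
      (fun n ↦ (stronglyMeasurable_clm_apply hB
        (continuous_volterraTerm hB hM x₀ n)).aestronglyMeasurable)
      (fun n ↦ .of_forall fun v hv ↦ ?_)
      (.of_forall fun _ _ ↦ ((Real.summable_pow_div_factorial (M * |u|)).mul_left ‖x₀‖).mul_left M)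
      intervalIntegrable_const
      (.of_forall fun v _ ↦ (hasSum_volterraTerm hM x₀ v).mapL (B v))
    have hvu : |v| ≤ |u| := by simpa using abs_sub_left_of_mem_uIcc (uIoc_subset_uIcc hv)
    exact (B v).le_of_opNorm_le_of_le (hM v) (norm_volterraTerm_le_of_abs_le hM x₀ n hvu)
  exact (hasSum_volterraTerm hM x₀ u).summable.tsum_eq_zero_add.trans
    (by rw [hintegral.tsum_eq]; rfl)

end LinearODE

/-- A strongly measurable, bounded and integrable coefficient on the line. Linear equations with
such a coefficient have global solutions with a uniform growth bound. -/
structure IsBoundedIntegrable {F : Type*} [NormedAddCommGroup F] (g : ℝ → F) : Prop where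
  stronglyMeasurable : StronglyMeasurable g
  exists_norm_le : ∃ M, ∀ u, ‖g u‖ ≤ M
  integrable : Integrable g

/-- The solution `Y` of `Y' = g Y` and the solution `W` of `W' = -W g`, both equal to `1` at the
origin. They are mutually inverse, and `W` passes to the moving frame in which `g` disappears. -/
structure IsFundamentalPair {R : Type*} [NormedRing R] [NormedAlgebra ℝ R] (g Y W : ℝ → R) :
    Prop where
  isACPrimitive_left : ∀ a b, IsACPrimitive Y (g * Y) a b
  isACPrimitive_right : ∀ a b, IsACPrimitive W (-(W * g)) a b
  left_zero : Y 0 = 1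
  right_zero : W 0 = 1

section FundamentalPair

theorem isACPrimitive_of_eq_add_integral {F : Type*} [NormedAddCommGroup F] [NormedSpace ℝ F]
    [CompleteSpace F] {P p : ℝ → F} {x₀ : F} (hp : ∀ a b, IntervalIntegrable p volume a b)
    (hP : ∀ u, P u = x₀ + ∫ v in 0..u, p v) (a b : ℝ) : IsACPrimitive P p a b :=
  .of_eq_add_integral (hp a b) fun u _ ↦ by
    rw [hP u, hP a, ← integral_interval_sub_left (hp 0 u) (hp 0 a), add_add_sub_cancel]

theorem abs_integral_le_integral_of_nonneg {φ : ℝ → ℝ} (hφ : Integrable φ) (hφ0 : ∀ x, 0 ≤ φ x)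
    (a b : ℝ) : |∫ x in a..b, φ x| ≤ ∫ x, φ x := by
  rw [abs_integral_eq_abs_integral_uIoc, abs_of_nonneg (integral_nonneg hφ0)]
  exact setIntegral_le_integral hφ (.of_forall hφ0)

variable {R : Type*} [NormedRing R] [NormedAlgebra ℝ R] {g Y W : ℝ → R}

theorem IsBoundedIntegrable.exists_isFundamentalPair [CompleteSpace R]
    (hg : IsBoundedIntegrable g) :
    ∃ Y W, IsFundamentalPair g Y W := by
  obtain ⟨M, hM⟩ := hg.exists_norm_le
  have hgint := intervalIntegrable_of_forall_norm_le hg.stronglyMeasurable hM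
  obtain ⟨Y, hYc, hY⟩ := exists_continuous_eq_add_integral (M := M)
    ((ContinuousLinearMap.mul ℝ R).continuous.comp_stronglyMeasurable hg.stronglyMeasurable)
    (fun u ↦ (ContinuousLinearMap.opNorm_mul_apply_le ℝ R _).trans (hM u)) 1
  obtain ⟨W, hWc, hW⟩ := exists_continuous_eq_add_integral (M := M)
    ((ContinuousLinearMap.mul ℝ R).flip.continuous.comp_stronglyMeasurable
      hg.stronglyMeasurable).neg
    (fun u ↦ ContinuousLinearMap.opNorm_le_bound _ ((norm_nonneg _).trans (hM u)) fun x ↦ by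
      simpa [mul_comm] using (norm_mul_le x (g u)).trans
        (mul_le_mul_of_nonneg_left (hM u) (norm_nonneg x))) 1
  exact ⟨Y, W,
    isACPrimitive_of_eq_add_integral (fun a b ↦ (hgint a b).mul_continuousOn hYc.continuousOn) hY,
    isACPrimitive_of_eq_add_integral
      (fun a b ↦ ((hgint a b).continuousOn_mul hWc.continuousOn).neg) hW,
    by simpa using hY 0, by simpa using hW 0⟩

namespace IsFundamentalPair

theorem continuous_right (h : IsFundamentalPair g Y W) : Continuous W :=
  continuous_iff_continuousAt.2 fun x ↦
    (h.isACPrimitive_right (x - 1) (x + 1)).continuousOn.continuousAt <| by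
      rw [uIcc_of_le (by linarith)]
      exact Icc_mem_nhds (by linarith) (by linarith)

/-- `Y W - 1` solves the homogeneous linear equation `Z' = g Z - Z g` and vanishes at `0`. -/
theorem mul_eq_one (h : IsFundamentalPair g Y W) (hg : Integrable g) (u : ℝ) :
    Y u * W u = 1 := by
  have hYW := (h.isACPrimitive_left 0 u).mul (h.isACPrimitive_right 0 u)
  have hclose := (hYW.sub_const 1).expClose_norm (φ := fun v ↦ 2 * ‖g v‖)
    (hg.norm.const_mul 2).intervalIntegrable (.of_forall fun v _ ↦ by
      calc ‖g v * Y v * W v + Y v * -(W v * g v)‖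
          = ‖g v * (Y v * W v - 1) - (Y v * W v - 1) * g v‖ := by congr 1; noncomm_ring
        _ ≤ ‖g v‖ * ‖Y v * W v - 1‖ + ‖Y v * W v - 1‖ * ‖g v‖ :=
            (norm_sub_le _ _).trans (add_le_add (norm_mul_le _ _) (norm_mul_le _ _))
        _ = 2 * ‖g v‖ * ‖Y v * W v - 1‖ := by ring)
  simpa [h.left_zero, h.right_zero, sub_eq_zero] using hclose.1

theorem expClose_left_mul (h : IsFundamentalPair g Y W) (hg : Integrable g) (u : ℝ) (x : R) :
    ExpClose (∫ v, ‖g v‖) ‖Y u * x‖ ‖x‖ := by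
  have hclose := ((h.isACPrimitive_left 0 u).mul_const x).expClose_norm
    hg.norm.intervalIntegrable (.of_forall fun v _ ↦ by
      rw [Pi.mul_apply, mul_assoc]
      exact norm_mul_le _ _)
  rw [h.left_zero, one_mul] at hclose
  exact hclose.mono (norm_nonneg _) (norm_nonneg _)
    (abs_integral_le_integral_of_nonneg hg.norm (fun v ↦ norm_nonneg (g v)) 0 u)

theorem expClose_right_mul (h : IsFundamentalPair g Y W) (hg : Integrable g) (u : ℝ) (x : R) :
    ExpClose (∫ v, ‖g v‖) ‖W u * x‖ ‖x‖ := by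
  simpa [← mul_assoc, h.mul_eq_one hg u] using (h.expClose_left_mul hg u (W u * x)).symm

theorem norm_conj_mul_le (h : IsFundamentalPair g Y W) (hg : Integrable g) (u : ℝ) (m z : R) :
    ‖W u * (m * (Y u * z))‖ ≤ Real.exp (2 * ∫ v, ‖g v‖) * ‖m‖ * ‖z‖ :=
  calc ‖W u * (m * (Y u * z))‖
      ≤ ‖m * (Y u * z)‖ * Real.exp (∫ v, ‖g v‖) := (h.expClose_right_mul hg u _).1
    _ ≤ ‖m‖ * (‖z‖ * Real.exp (∫ v, ‖g v‖)) * Real.exp (∫ v, ‖g v‖) := by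
        gcongr
        exact (norm_mul_le _ _).trans (by gcongr; exact (h.expClose_left_mul hg u z).1)
    _ = Real.exp (2 * ∫ v, ‖g v‖) * ‖m‖ * ‖z‖ := by rw [two_mul, Real.exp_add]; ring

variable [CompleteSpace R]

theorem isACPrimitive_right_comp (h : IsFundamentalPair g Y W) (hg : IsBoundedIntegrable g)
    {f f' : ℝ → ℝ} {a b : ℝ} (hf : IsACPrimitive f f' a b) :
    IsACPrimitive (fun x ↦ W (f x)) (fun x ↦ f' x • -(W (f x) * g (f x))) a b := by
  obtain ⟨M, hM⟩ := hg.exists_norm_le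
  refine hf.comp h.isACPrimitive_right
    (h.continuous_right.stronglyMeasurable.mul hg.stronglyMeasurable).neg
    (M := ‖(1 : R)‖ * Real.exp (∫ v, ‖g v‖) * M) fun u ↦ ?_
  rw [Pi.neg_apply, norm_neg]
  refine (norm_mul_le _ _).trans ?_
  gcongr
  exacts [by simpa using (h.expClose_right_mul hg.integrable u 1).1, hM u]

/-- In the moving frame `W ∘ f` the equation `X' = A X` becomes
`Z' = W(f) (A - f' g(f)) Y(f) Z`. -/
theorem expClose_right_comp_mul (h : IsFundamentalPair g Y W) (hg : IsBoundedIntegrable g)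
    {f f' φ : ℝ → ℝ} {A X : ℝ → R} {a b : ℝ} (hf : IsACPrimitive f f' a b)
    (hX : IsACPrimitive X (A * X) a b) (hφ : IntervalIntegrable φ volume a b)
    (hA : ∀ᵐ x, x ∈ uIcc a b → ‖A x - f' x • g (f x)‖ ≤ φ x) :
    ExpClose (Real.exp (2 * ∫ v, ‖g v‖) * |∫ x in a..b, φ x|)
      ‖W (f b) * X b‖ ‖W (f a) * X a‖ := by
  have hZ := ((h.isACPrimitive_right_comp hg hf).mul hX).expClose_norm
    (hφ.const_mul (Real.exp (2 * ∫ v, ‖g v‖))) <| hA.mono fun x hx hxab ↦ by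
      have hXx : X x = Y (f x) * (W (f x) * X x) := by
        rw [← mul_assoc, h.mul_eq_one hg.integrable, one_mul]
      calc ‖f' x • -(W (f x) * g (f x)) * X x + W (f x) * (A x * X x)‖
          = ‖W (f x) * ((A x - f' x • g (f x)) * X x)‖ := by
            congr 1
            simp only [sub_mul, mul_sub, smul_neg, neg_mul, smul_mul_assoc, mul_smul_comm,
              mul_assoc]
            abel
        _ = ‖W (f x) * ((A x - f' x • g (f x)) * (Y (f x) * (W (f x) * X x)))‖ := by rw [← hXx]
        _ ≤ Real.exp (2 * ∫ v, ‖g v‖) * ‖A x - f' x • g (f x)‖ * ‖W (f x) * X x‖ :=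
            h.norm_conj_mul_le hg.integrable _ _ _
        _ ≤ Real.exp (2 * ∫ v, ‖g v‖) * φ x * ‖W (f x) * X x‖ := by gcongr; exact hx hxab
  simpa [intervalIntegral.integral_const_mul, abs_mul] using hZ

theorem expClose_right_mul_right_mul {g₁ Y₁ W₁ g₂ Y₂ W₂ : ℝ → R} (h₁ : IsFundamentalPair g₁ Y₁ W₁)
    (hg₁ : IsBoundedIntegrable g₁) (h₂ : IsFundamentalPair g₂ Y₂ W₂) (hg₂ : Integrable g₂)
    (u : ℝ) (x : R) :
    ExpClose (Real.exp (2 * ∫ v, ‖g₁ v‖) * ∫ v, ‖g₂ v - g₁ v‖) ‖W₁ u * x‖ ‖W₂ u * x‖ := by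
  have hid : IsACPrimitive (fun v : ℝ ↦ v) 1 0 u :=
    ⟨LipschitzWith.id.lipschitzOnWith.absolutelyContinuousOnInterval, intervalIntegrable_const,
      .of_forall fun v _ ↦ hasDerivAt_id v⟩
  have hclose := h₁.expClose_right_comp_mul hg₁ hid (A := g₂)
    (by simpa only [Pi.mul_def, mul_assoc] using (h₂.isACPrimitive_left 0 u).mul_const (W₂ u * x))
    (hg₂.sub hg₁.integrable).norm.intervalIntegrable (.of_forall fun v _ ↦ by simp)
  simp only [h₁.right_zero, h₂.left_zero, one_mul, ← mul_assoc (Y₂ u), h₂.mul_eq_one hg₂]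
    at hclose
  refine hclose.mono (norm_nonneg _) (norm_nonneg _) ?_
  gcongr
  exact abs_integral_le_integral_of_nonneg (hg₂.sub hg₁.integrable).norm
    (fun v ↦ norm_nonneg _) 0 u

end IsFundamentalPair

end FundamentalPair

section SupContinuity

variable {F : Type*} [SeminormedAddCommGroup F] {G : ℝ → ℝ → F} {I J : Set ℝ}

/-- Continuity of `t ↦ G t` on `I` for the supremum distance of functions on `J`, encoded by the
type synonym `UniformFun` that carries this (possibly infinite) distance. -/
def IsSupContinuousOn (G : ℝ → ℝ → F) (I J : Set ℝ) : Prop :=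
  ContinuousOn (fun t ↦ UniformFun.ofFun (J.domRestrict (G t))) I

theorem isSupContinuousOn_of_forall_exists
    (h : ∀ t ∈ I, ∀ ε > (0 : ℝ), ∃ δ > (0 : ℝ), ∀ s ∈ I, |s - t| < δ →
      ∀ u ∈ J, ‖G s u - G t u‖ < ε) : IsSupContinuousOn G I J := fun t ht ↦ by
  rw [ContinuousWithinAt, UniformFun.tendsto_iff_tendstoUniformly,
    Metric.tendstoUniformly_iff]
  intro ε hε
  obtain ⟨δ, hδ, hGδ⟩ := h t ht ε hε
  filter_upwards [self_mem_nhdsWithin, nhdsWithin_le_nhds (Metric.ball_mem_nhds t hδ)]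
    with s hs hst u
  rw [dist_comm, dist_eq_norm]
  exact hGδ s hs hst u u.2

theorem IsSupContinuousOn.mono {I' : Set ℝ} (hG : IsSupContinuousOn G I J) (hI : I' ⊆ I) :
    IsSupContinuousOn G I' J :=
  ContinuousOn.mono hG hI

theorem IsSupContinuousOn.tendsto (hG : IsSupContinuousOn G I J) {t u : ℝ} (ht : t ∈ I)
    (hu : u ∈ J) : Tendsto (fun τ ↦ G τ u) (𝓝[I] t) (𝓝 (G t u)) :=
  (UniformFun.tendsto_iff_tendstoUniformly.1 (hG t ht)).tendsto_at ⟨u, hu⟩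

theorem IsSupContinuousOn.exists_forall_norm_sub_le (hG : IsSupContinuousOn G I J)
    (hI : IsCompact I) {ε : ℝ} (hε : 0 < ε) :
    ∃ δ > 0, ∀ t ∈ I, ∀ s ∈ I, |s - t| < δ → ∀ u ∈ J, ‖G s u - G t u‖ ≤ ε := by
  obtain ⟨δ, hδ, hGδ⟩ := Metric.mem_uniformity_dist.1 <|
    mem_inf_principal.1 <| hI.uniformContinuousOn_of_continuous hG <|
      (UniformFun.hasBasis_uniformity J F).mem_of_mem (Metric.dist_mem_uniformity hε)
  refine ⟨δ, hδ, fun t ht s hs hst u hu ↦ ?_⟩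
  have hdist : ∀ v : J, dist (G s v) (G t v) < ε := hGδ (a := s) (b := t) hst ⟨hs, ht⟩
  exact (dist_eq_norm (G s u) _ ▸ hdist ⟨u, hu⟩).le

end SupContinuity

theorem exists_strictMono_partition {a b δ : ℝ} (hab : a < b) (hδ : 0 < δ) :
    ∃ (n : ℕ) (p : ℕ → ℝ), StrictMono p ∧ p 0 = a ∧ p n = b ∧ ∀ i, p (i + 1) - p i < δ := by
  obtain ⟨n, hn⟩ := exists_nat_gt ((b - a) / δ)
  have hab' : 0 < b - a := sub_pos.2 hab
  have hn0 : (0 : ℝ) < n := (div_pos hab' hδ).trans hn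
  have hmesh : 0 < (b - a) / n := div_pos hab' hn0
  refine ⟨n, fun i ↦ a + i * ((b - a) / n), strictMono_nat_of_lt_succ fun i ↦ ?_, by simp,
    by field_simp; ring, fun i ↦ ?_⟩
  · push_cast
    linarith
  · have hlt : (b - a) / n < δ := by rwa [div_lt_comm₀ hn0 hδ]
    push_cast
    linarith

theorem AbsolutelyContinuousOn.absolutelyContinuousOnInterval {f : ℝ → ℝ} {a b : ℝ}
    (h : AbsolutelyContinuousOn f (uIcc a b)) : AbsolutelyContinuousOnInterval f a b := by
  rw [absolutelyContinuousOnInterval_iff]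
  intro ε hε
  obtain ⟨δ, hδ, hfδ⟩ := h ε hε
  refine ⟨δ, hδ, fun E hE hlt ↦ ?_⟩
  simp only [Real.dist_eq, abs_sub_comm (E.2 _).1, abs_sub_comm (f (E.2 _).1)] at hlt ⊢
  have huIoc : ∀ u v : ℝ, Ioo (min u v) (max u v) ⊆ uIoc u v := fun u v ↦ Ioo_subset_Ioc_self
  have hsum := hfδ E.1 (fun i ↦ min (E.2 i).1 (E.2 i).2) (fun i ↦ max (E.2 i).1 (E.2 i).2)
    (fun i hi ↦ ?_) (fun i hi j hj hij ↦ ?_) (by simpa only [max_sub_min_eq_abs] using hlt)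
  · refine (Finset.sum_congr rfl fun i _ ↦ ?_).trans_lt hsum
    rcases le_total (E.2 i).1 (E.2 i).2 with hle | hle
    · simp only [min_eq_left hle, max_eq_right hle]
    · simp only [min_eq_right hle, max_eq_left hle, abs_sub_comm]
  · obtain ⟨hu, hv⟩ := hE.1 i (Finset.mem_range.2 hi)
    exact ⟨min_rec' (· ∈ uIcc a b) hu hv, max_rec' (· ∈ uIcc a b) hu hv, min_le_max⟩
  · exact ((hE.2 (by simpa using hi) (by simpa using hj) hij).mono (huIoc _ _)
      (huIoc _ _)).inter_eq

theorem LocallyAbsolutelyContinuousOn.isACPrimitive {I : Set ℝ} (hI : I.OrdConnected)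
    {f f' : ℝ → ℝ} (hf : LocallyAbsolutelyContinuousOn f I) (hf' : IsDerivWithinOf f' f I)
    {a b : ℝ} (ha : a ∈ I) (hb : b ∈ I) : IsACPrimitive f f' a b := by
  wlog hab : a ≤ b generalizing a b
  · exact (this hb ha (le_of_not_ge hab)).symm
  have hac : AbsolutelyContinuousOnInterval f a b :=
    (show AbsolutelyContinuousOn f (uIcc a b) by
      rw [uIcc_of_le hab]; exact hf a ha b hb).absolutelyContinuousOnInterval
  have hderiv : ∀ᵐ x, x ∈ uIcc a b → HasDerivAt f (f' x) x := by
    filter_upwards [hac.ae_differentiableAt, Measure.ae_ne volume a, Measure.ae_ne volume b]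
      with x hx hxa hxb hxab
    rw [uIcc_of_le hab] at hxab
    have hI_nhds : I ∈ 𝓝 x := mem_of_superset
      (Icc_mem_nhds (hxab.1.lt_of_ne hxa.symm) (hxab.2.lt_of_ne hxb)) (hI.out ha hb)
    refine ((hf' x (hI.out ha hb hxab)).1 ?_).hasDerivAt hI_nhds
    exact (hx (by rwa [uIcc_of_le hab])).differentiableWithinAt
  refine ⟨hac, hac.boundedVariationOn.intervalIntegrable_deriv.congr_ae ?_, hderiv⟩
  rw [EventuallyEq, ae_restrict_iff' measurableSet_uIoc]
  exact hderiv.mono fun x hx hxab ↦ (hx (uIoc_subset_uIcc hxab)).deriv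

section Truncation

variable {F : Type*} [NormedAddCommGroup F] {y g : ℝ → F} {J K : Set ℝ}

theorem LocEssBdd.exists_ae_norm_le (hy : LocEssBdd y J) (hK : IsCompact K) (hKJ : K ⊆ J) :
    ∃ M, ∀ᵐ u, u ∈ K → ‖y u‖ ≤ M := by
  rcases K.eq_empty_or_nonempty with rfl | hne
  · exact ⟨0, by simp⟩
  obtain ⟨M, hM⟩ := hy.2 _ (hKJ (hK.sInf_mem hne)) _ (hKJ (hK.sSup_mem hne))
  exact ⟨M, ((ae_restrict_iff' measurableSet_uIcc).1 hM).mono fun u hu huK ↦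
    hu (Icc_subset_uIcc ⟨csInf_le hK.bddBelow huK, le_csSup hK.bddAbove huK⟩)⟩

theorem LocEssBdd.exists_isBoundedIntegrable (hy : LocEssBdd y J) (hK : IsCompact K)
    (hKJ : K ⊆ J) : ∃ g, IsBoundedIntegrable g ∧ g =ᵐ[volume] K.indicator y := by
  obtain ⟨M, hM⟩ := hy.exists_ae_norm_le hK hKJ
  have hyK : AEStronglyMeasurable y (volume.restrict K) := hy.1.mono_set hKJ
  have hmk : StronglyMeasurable (hyK.mk y) := hyK.stronglyMeasurable_mk
  set S := K ∩ {u | ‖hyK.mk y u‖ ≤ M}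
  have hS : MeasurableSet S := hK.measurableSet.inter (hmk.norm.measurable measurableSet_Iic)
  have hbound : ∀ u, ‖S.indicator (hyK.mk y) u‖ ≤ max M 0 := fun u ↦ by
    by_cases hu : u ∈ S
    · rw [indicator_of_mem hu]
      exact hu.2.trans (le_max_left _ _)
    · rw [indicator_of_notMem hu, norm_zero]
      exact le_max_right _ _
  refine ⟨S.indicator (hyK.mk y), ⟨hmk.indicator hS, ⟨_, hbound⟩, ?_⟩, ?_⟩
  · rw [integrable_indicator_iff hS]
    refine Measure.integrableOn_of_bounded (M := M) ?_ hmk.aestronglyMeasurable ?_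
    · exact measure_ne_top_of_subset inter_subset_left hK.measure_ne_top
    · exact (ae_restrict_iff' hS).2 (.of_forall fun u hu ↦ hu.2)
  · filter_upwards [(ae_restrict_iff' hK.measurableSet).1 hyK.ae_eq_mk, hM] with u hyu hMu
    by_cases hu : u ∈ K
    · have huS : u ∈ S := ⟨hu, by simpa only [mem_ofPred_eq, ← hyu hu] using hMu hu⟩
      rw [indicator_of_mem hu, indicator_of_mem huS, hyu hu]
    · rw [indicator_of_notMem hu, indicator_of_notMem fun h ↦ hu h.1]

theorem integral_norm_le_setIntegral_of_ae_eq_indicator (hK : MeasurableSet K) (hKJ : K ⊆ J)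
    (hy : IntegrableOn y J) (hg : g =ᵐ[volume] K.indicator y) :
    ∫ u, ‖g u‖ ≤ ∫ u in J, ‖y u‖ :=
  calc ∫ u, ‖g u‖ = ∫ u in K, ‖y u‖ := by
        rw [← MeasureTheory.integral_indicator hK]
        exact integral_congr_ae <| hg.mono fun u hu ↦ by
          simp only [hu, norm_indicator_eq_indicator_norm]
    _ ≤ ∫ u in J, ‖y u‖ := setIntegral_mono_set hy.norm (.of_forall fun u ↦ norm_nonneg _)
        hKJ.eventuallyLE

end Truncation

section Integrability

theorem aestronglyMeasurable_simpleFunc_apply {α β F : Type*} [MeasurableSpace α]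
    [TopologicalSpace F] [TopologicalSpace.PseudoMetrizableSpace F] {μ : Measure α}
    (q : SimpleFunc α β) {Φ : β → α → F} (hΦ : ∀ x, AEStronglyMeasurable (Φ (q x)) μ) :
    AEStronglyMeasurable (fun x ↦ Φ (q x) x) μ := by
  have hcover : ⋃ τ : q.range, q ⁻¹' {(τ : β)} = univ := iUnion_eq_univ_iff.2 fun x ↦
    ⟨⟨q x, q.mem_range_self x⟩, rfl⟩
  rw [← Measure.restrict_univ (μ := μ), ← hcover, aestronglyMeasurable_iUnion_iff]
  rintro ⟨τ, hτ⟩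
  obtain ⟨x, rfl⟩ := SimpleFunc.mem_range.1 hτ
  refine (hΦ x).restrict.congr ?_
  rw [EventuallyEq, ae_restrict_iff' (q.measurableSet_fiber _)]
  exact .of_forall fun z hz ↦ by rw [show q z = q x from hz]

/-- `Φ x x` is the limit of `Φ (qₙ x) x` for simple functions `qₙ` converging to the identity. -/
theorem aestronglyMeasurable_diag {α F : Type*} [MeasurableSpace α] [PseudoEMetricSpace α]
    [OpensMeasurableSpace α] [SecondCountableTopology α] [TopologicalSpace F]
    [TopologicalSpace.PseudoMetrizableSpace F] {μ : Measure α} {s : Set α} (hs : MeasurableSet s)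
    {Φ : α → α → F} (hΦ : ∀ τ ∈ s, AEStronglyMeasurable (Φ τ) (μ.restrict s))
    (hcont : ∀ x ∈ s, Tendsto (fun τ ↦ Φ τ x) (𝓝[s] x) (𝓝 (Φ x x))) :
    AEStronglyMeasurable (fun x ↦ Φ x x) (μ.restrict s) := by
  rcases s.eq_empty_or_nonempty with rfl | ⟨y, hy⟩
  · simp
  let q := SimpleFunc.approxOn (id : α → α) measurable_id s y hy
  have hqs : ∀ n x, q n x ∈ s := SimpleFunc.approxOn_mem measurable_id hy
  refine aestronglyMeasurable_of_tendsto_ae atTop (f := fun n x ↦ Φ (q n x) x)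
    (fun n ↦ aestronglyMeasurable_simpleFunc_apply (q n) fun x ↦ hΦ _ (hqs n x)) ?_
  rw [ae_restrict_iff' hs]
  refine .of_forall fun x hx ↦ (hcont x hx).comp ?_
  exact tendsto_nhdsWithin_iff.2
    ⟨SimpleFunc.tendsto_approxOn measurable_id hy (subset_closure hx), .of_forall fun n ↦ hqs n x⟩

variable {F : Type*} [NormedAddCommGroup F] [NormedSpace ℝ F] {f f' : ℝ → ℝ} {a b : ℝ}

theorem LocEssBdd.exists_isBoundedIntegrable_smul_comp {y : ℝ → F} {J : Set ℝ}
    (hy : LocEssBdd y J) (hf : IsACPrimitive f f' a b) (hfJ : MapsTo f (uIcc a b) J) :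
    ∃ g, IsBoundedIntegrable g ∧ g =ᵐ[volume] (f '' uIcc a b).indicator y ∧
      ∀ᵐ x, x ∈ uIcc a b → f' x • g (f x) = f' x • y (f x) := by
  obtain ⟨g, hg, hgy⟩ := hy.exists_isBoundedIntegrable
    (isCompact_uIcc.image_of_continuousOn hf.continuousOn) (image_subset_iff.2 hfJ)
  exact ⟨g, hg, hgy, hf.smul_comp_ae_eq (mapsTo_image f _)
    (hgy.mono fun u hu hus ↦ by rw [hu, indicator_of_mem hus])⟩

variable {G : ℝ → ℝ → F} {I J : Set ℝ}

theorem aestronglyMeasurable_smul_comp (hG : IsSupContinuousOn G I J)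
    (hGm : ∀ t ∈ I, LocEssBdd (G t) J) (hI : uIcc a b ⊆ I) (hf : IsACPrimitive f f' a b)
    (hfJ : MapsTo f (uIcc a b) J) :
    AEStronglyMeasurable (fun x ↦ f' x • G x (f x)) (volume.restrict (uIoc a b)) := by
  refine aestronglyMeasurable_diag (Φ := fun τ x ↦ f' x • G τ (f x)) measurableSet_uIoc
    (fun τ hτ ↦ ?_) fun x hx ↦ ?_
  · obtain ⟨g, hg, -, hgG⟩ :=
      (hGm τ (hI (uIoc_subset_uIcc hτ))).exists_isBoundedIntegrable_smul_comp hf hfJ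
    obtain ⟨M, hM⟩ := hg.exists_norm_le
    refine (hf.smul_comp_intervalIntegrable hg.stronglyMeasurable
      hM).aestronglyMeasurable_restrict_uIoc.congr ?_
    exact (ae_restrict_iff' measurableSet_uIoc).2
      (hgG.mono fun x hx hxab ↦ hx (uIoc_subset_uIcc hxab))
  · have hx' := uIoc_subset_uIcc hx
    exact ((hG.tendsto (hI hx') (hfJ hx')).mono_left
      (nhdsWithin_mono x (uIoc_subset_uIcc.trans hI))).const_smul _

theorem intervalIntegrable_smul_comp (hG : IsSupContinuousOn G I J)
    (hGm : ∀ t ∈ I, LocEssBdd (G t) J) (hI : uIcc a b ⊆ I) (hf : IsACPrimitive f f' a b)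
    (hfJ : MapsTo f (uIcc a b) J) : IntervalIntegrable (fun x ↦ f' x • G x (f x)) volume a b := by
  obtain ⟨δ, hδ, hGδ⟩ := (hG.mono hI).exists_forall_norm_sub_le isCompact_uIcc one_pos
  choose! g hg _ hfgG using fun τ (hτ : τ ∈ uIcc a b) ↦
    (hGm τ (hI hτ)).exists_isBoundedIntegrable_smul_comp hf hfJ
  choose! M hM using fun τ (hτ : τ ∈ uIcc a b) ↦ (hg τ hτ).exists_norm_le
  obtain ⟨T, hT, hTfin, hcover⟩ :=
    (isCompact_uIcc (a := a) (b := b)).finite_cover_balls hδ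
  obtain ⟨C, hC⟩ := (hTfin.image M).bddAbove
  refine (hf.intervalIntegrable.norm.const_mul (C + 1)).mono_fun'
    (aestronglyMeasurable_smul_comp hG hGm hI hf hfJ) ((ae_restrict_iff' measurableSet_uIoc).2 ?_)
  filter_upwards [(ae_ball_iff hTfin.countable).2 fun τ hτ ↦ hfgG τ (hT hτ)] with x hx hxab
  have hxab' : x ∈ uIcc a b := uIoc_subset_uIcc hxab
  obtain ⟨τ, hτ, hxτ⟩ := mem_iUnion₂.1 (hcover hxab')
  have hgC : ‖g τ (f x)‖ ≤ C := (hM τ (hT hτ) _).trans (hC (mem_image_of_mem M hτ))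
  have hGx : ‖G x (f x) - G τ (f x)‖ ≤ 1 := hGδ τ (hT hτ) x hxab' hxτ _ (hfJ hxab')
  calc ‖f' x • G x (f x)‖ = ‖f' x • (g τ (f x) + (G x (f x) - G τ (f x)))‖ := by
        rw [smul_add, hx τ hτ hxab', ← smul_add, add_sub_cancel]
    _ ≤ ‖f' x‖ * (C + 1) := by
        rw [norm_smul]
        gcongr
        exact (norm_add_le _ _).trans (add_le_add hgC hGx)
    _ = (C + 1) * ‖f' x‖ := mul_comm _ _

end Integrability

section FrozenCoefficients

variable {R : Type*} [NormedRing R] [NormedAlgebra ℝ R] [CompleteSpace R] {A X : ℝ → R}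
  {f f' φ : ℝ → ℝ} {r : ℝ}

theorem IsFundamentalPair.expClose_change_frame {g₁ Y₁ W₁ g₂ Y₂ W₂ : ℝ → R} {a b : ℝ}
    (h₁ : IsFundamentalPair g₁ Y₁ W₁) (hg₁ : IsBoundedIntegrable g₁)
    (h₂ : IsFundamentalPair g₂ Y₂ W₂) (hg₂ : Integrable g₂) (hr : ∫ v, ‖g₁ v‖ ≤ r)
    (hf : IsACPrimitive f f' a b) (hX : IsACPrimitive X (A * X) a b)
    (hφ : IntervalIntegrable φ volume a b)
    (hA : ∀ᵐ x, x ∈ uIcc a b → ‖A x - f' x • g₁ (f x)‖ ≤ φ x) :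
    ExpClose (Real.exp (2 * r) * ((∫ v, ‖g₂ v - g₁ v‖) + |∫ x in a..b, φ x|))
      ‖W₂ (f b) * X b‖ ‖W₁ (f a) * X a‖ := by
  refine ((h₁.expClose_right_mul_right_mul hg₁ h₂ hg₂ (f b) (X b)).symm.trans
    (h₁.expClose_right_comp_mul hg₁ hf hX hφ hA)).mono (norm_nonneg _) (norm_nonneg _) ?_
  rw [← mul_add]
  gcongr

/-- On the `i`-th piece the moving frame of `g i` turns `X' = A X` into an equation with a small
coefficient; the change of frame between pieces costs the distance of consecutive `g i`. -/
theorem expClose_of_forall_piece {n : ℕ} {p : ℕ → ℝ} (hp : Monotone p) {g : ℕ → ℝ → R} {V : ℝ}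
    (hg : ∀ i ≤ n, IsBoundedIntegrable (g i)) (hr : ∀ i ≤ n, ∫ v, ‖g i v‖ ≤ r)
    (hV : ∑ i ∈ Finset.range n, ∫ v, ‖g (i + 1) v - g i v‖ ≤ V)
    (hf : IsACPrimitive f f' (p 0) (p n)) (hX : IsACPrimitive X (A * X) (p 0) (p n))
    (hφ : IntervalIntegrable φ volume (p 0) (p n)) (hφ0 : ∀ x, 0 ≤ φ x)
    (hA : ∀ i < n, ∀ᵐ x, x ∈ uIcc (p i) (p (i + 1)) → ‖A x - f' x • g i (f x)‖ ≤ φ x) :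
    ExpClose (2 * r + Real.exp (2 * r) * (V + ∫ x in p 0..p n, φ x)) ‖X (p n)‖ ‖X (p 0)‖ := by
  choose! Y W hYW using fun i hi ↦ (hg i hi).exists_isFundamentalPair
  have hsub : ∀ i < n, uIcc (p i) (p (i + 1)) ⊆ uIcc (p 0) (p n) := fun i hi ↦ by
    rw [uIcc_of_le (hp i.le_succ), uIcc_of_le (hp n.zero_le)]
    exact Icc_subset_Icc (hp i.zero_le) (hp hi)
  have hφi : ∀ i < n, IntervalIntegrable φ volume (p i) (p (i + 1)) := fun i hi ↦
    hφ.mono_set (hsub i hi)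
  have hpiece : ∀ i < n,
      ExpClose (Real.exp (2 * r) *
          ((∫ v, ‖g (i + 1) v - g i v‖) + ∫ x in p i..p (i + 1), φ x))
        ‖W (i + 1) (f (p (i + 1))) * X (p (i + 1))‖ ‖W i (f (p i)) * X (p i)‖ := fun i hi ↦ by
    have hframe := (hYW i hi.le).expClose_change_frame (hg i hi.le) (hYW (i + 1) hi)
      (hg (i + 1) hi).integrable (hr i hi.le) (hf.mono (hsub i hi)) (hX.mono (hsub i hi))
      (hφi i hi) (hA i hi)
    rwa [abs_of_nonneg (integral_nonneg (hp i.le_succ) fun x _ ↦ hφ0 x)] at hframe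
  have hchain := ExpClose.sum_range (z := fun i ↦ ‖W i (f (p i)) * X (p i)‖) hpiece
  rw [← Finset.mul_sum, Finset.sum_add_distrib, sum_integral_adjacent_intervals hφi] at hchain
  have hfirst := (hYW 0 n.zero_le).expClose_right_mul (hg 0 n.zero_le).integrable (f (p 0))
    (X (p 0))
  have hlast := (hYW n le_rfl).expClose_right_mul (hg n le_rfl).integrable (f (p n)) (X (p n))
  refine (hlast.symm.trans (hchain.trans hfirst)).mono (norm_nonneg _) (norm_nonneg _) ?_
  have hexp := mul_le_mul_of_nonneg_left (add_le_add_left hV (∫ x in p 0..p n, φ x))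
    (Real.exp_pos (2 * r)).le
  linarith [hr 0 n.zero_le, hr n le_rfl]

variable {G : ℝ → ℝ → R} {I J : Set ℝ} {V s t ε : ℝ}

theorem expClose_norm_solution_add (hI : I.OrdConnected) (hG : IsSupContinuousOn G I J)
    (hGm : ∀ t ∈ I, LocEssBdd (G t) J) (hGi : ∀ t ∈ I, IntegrableOn (G t) J)
    (hV : ∀ v ∈ l1VarSums G I J, v ≤ V) (hr : ∀ t ∈ I, ∫ u in J, ‖G t u‖ ≤ r)
    (hfJ : MapsTo f I J) (hs : s ∈ I) (ht : t ∈ I) (hst : s < t) (hf : IsACPrimitive f f' s t)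
    (hX : IsACPrimitive X ((fun x ↦ f' x • G x (f x)) * X) s t) (hε : 0 < ε) :
    ExpClose (2 * r + Real.exp (2 * r) * (V + ∫ x in s..t, ε * |f' x|)) ‖X t‖ ‖X s‖ := by
  have hstI : uIcc s t ⊆ I := hI.uIcc_subset hs ht
  obtain ⟨δ, hδ, hGδ⟩ := (hG.mono hstI).exists_forall_norm_sub_le isCompact_uIcc hε
  obtain ⟨n, p, hp, rfl, rfl, hmesh⟩ := exists_strictMono_partition hst hδ
  have hpn : ∀ i ≤ n, p i ∈ uIcc (p 0) (p n) := fun i hi ↦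
    Icc_subset_uIcc ⟨hp.monotone i.zero_le, hp.monotone hi⟩
  choose! g hg hgG hfgG using fun τ (hτ : τ ∈ uIcc (p 0) (p n)) ↦
    (hGm τ (hstI hτ)).exists_isBoundedIntegrable_smul_comp hf (hfJ.mono_left hstI)
  have hK : MeasurableSet (f '' uIcc (p 0) (p n)) :=
    (isCompact_uIcc.image_of_continuousOn hf.continuousOn).measurableSet
  have hKJ : f '' uIcc (p 0) (p n) ⊆ J := image_subset_iff.2 (hfJ.mono_left hstI)
  refine expClose_of_forall_piece hp.monotone (g := fun i ↦ g (p i)) (fun i hi ↦ hg _ (hpn i hi))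
    (fun i hi ↦ ?_) ((Finset.sum_le_sum fun i hi ↦ ?_).trans
      (hV _ ⟨n, p, fun i hi ↦ hstI (hpn i hi), fun i _ ↦ hp i.lt_succ_self, rfl⟩)) hf hX
    (hf.intervalIntegrable.abs.const_mul ε) (fun x ↦ by positivity) fun i hi ↦ ?_
  · exact (integral_norm_le_setIntegral_of_ae_eq_indicator hK hKJ (hGi _ (hstI (hpn i hi)))
      (hgG _ (hpn i hi))).trans (hr _ (hstI (hpn i hi)))
  · have hpi := hpn i (Finset.mem_range.1 hi).le
    have hpi' := hpn (i + 1) (Finset.mem_range.1 hi)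
    refine integral_norm_le_setIntegral_of_ae_eq_indicator hK hKJ
      ((hGi _ (hstI hpi')).sub (hGi _ (hstI hpi))) ?_
    rw [indicator_sub]
    exact (hgG _ hpi').sub (hgG _ hpi)
  · filter_upwards [hfgG (p i) (hpn i hi.le)] with x hx hxi
    have hxst : x ∈ uIcc (p 0) (p n) := uIcc_subset_uIcc (hpn i hi.le) (hpn (i + 1) hi) hxi
    rw [uIcc_of_le (hp.monotone i.le_succ)] at hxi
    rw [hx hxst, ← smul_sub, norm_smul, mul_comm, Real.norm_eq_abs]
    gcongr
    refine hGδ _ (hpn i hi.le) x hxst ?_ _ (hfJ (hstI hxst))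
    rw [abs_of_nonneg (sub_nonneg.2 hxi.1)]
    linarith [hmesh i, hxi.2]

theorem expClose_norm_solution_of_lt (hI : I.OrdConnected) (hG : IsSupContinuousOn G I J)
    (hGm : ∀ t ∈ I, LocEssBdd (G t) J) (hGi : ∀ t ∈ I, IntegrableOn (G t) J)
    (hV : ∀ v ∈ l1VarSums G I J, v ≤ V) (hr : ∀ t ∈ I, ∫ u in J, ‖G t u‖ ≤ r)
    (hfJ : MapsTo f I J) (hs : s ∈ I) (ht : t ∈ I) (hst : s < t) (hf : IsACPrimitive f f' s t)
    (hX : IsACPrimitive X ((fun x ↦ f' x • G x (f x)) * X) s t) :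
    ExpClose (2 * r + Real.exp (2 * r) * V) ‖X t‖ ‖X s‖ := by
  have hlim : Tendsto (fun ε : ℝ ↦ 2 * r + Real.exp (2 * r) * (V + ∫ x in s..t, ε * |f' x|))
      (𝓝[>] 0) (𝓝 (2 * r + Real.exp (2 * r) * V)) := by
    simp only [intervalIntegral.integral_const_mul]
    refine tendsto_nhdsWithin_of_tendsto_nhds (Continuous.tendsto' (by fun_prop) _ _ (by simp))
  exact .of_tendsto hlim <| eventually_mem_nhdsWithin.mono fun _ ↦
    expClose_norm_solution_add hI hG hGm hGi hV hr hfJ hs ht hst hf hX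

end FrozenCoefficients

section BoundedVariation

variable {F : Type*} [NormedAddCommGroup F] {G : ℝ → ℝ → F} {I J : Set ℝ} {V a b t : ℝ}

theorem sSup_l1VarSums_nonneg : 0 ≤ sSup (l1VarSums G I J) := by
  refine Real.sSup_nonneg ?_
  rintro _ ⟨n, p, -, -, rfl⟩
  exact Finset.sum_nonneg fun i _ ↦ integral_nonneg fun u ↦ norm_nonneg _

theorem iSup_setIntegral_norm_nonneg : 0 ≤ ⨆ t ∈ I, ∫ u in J, ‖G t u‖ :=
  Real.iSup_nonneg fun _ ↦ Real.iSup_nonneg fun _ ↦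
    MeasureTheory.integral_nonneg fun _ ↦ norm_nonneg _

theorem setIntegral_norm_sub_le_sSup_l1VarSums (hBV : BddAbove (l1VarSums G I J)) (ha : a ∈ I)
    (hb : b ∈ I) : ∫ u in J, ‖G b u - G a u‖ ≤ sSup (l1VarSums G I J) := by
  wlog hab : a ≤ b generalizing a b
  · simpa only [norm_sub_rev] using this hb ha (le_of_not_ge hab)
  obtain rfl | hab := hab.eq_or_lt
  · simpa using sSup_l1VarSums_nonneg
  · refine le_csSup hBV ⟨1, fun i ↦ if i = 0 then a else b, fun i _ ↦ ?_, fun i hi ↦ ?_, by simp⟩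
    · dsimp only
      split_ifs <;> assumption
    · simpa [Nat.lt_one_iff.1 hi] using hab

theorem bddAbove_range_setIntegral_norm (hBV : BddAbove (l1VarSums G I J))
    (hGi : ∀ t ∈ I, IntegrableOn (G t) J) (ha : a ∈ I) :
    BddAbove (range fun t ↦ ⨆ _ : t ∈ I, ∫ u in J, ‖G t u‖) := by
  refine ⟨(∫ u in J, ‖G a u‖) + sSup (l1VarSums G I J), ?_⟩
  rintro _ ⟨t, rfl⟩
  refine Real.iSup_le (fun ht ↦ ?_)
    (add_nonneg (MeasureTheory.integral_nonneg fun _ ↦ norm_nonneg _) sSup_l1VarSums_nonneg)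
  have hsub : IntegrableOn (fun u ↦ ‖G t u - G a u‖) J := ((hGi t ht).sub (hGi a ha)).norm
  calc ∫ u in J, ‖G t u‖ ≤ ∫ u in J, ‖G a u‖ + ‖G t u - G a u‖ :=
        integral_mono (hGi t ht).norm ((hGi a ha).norm.add hsub) fun u ↦
          norm_le_norm_add_norm_sub' _ _
    _ = (∫ u in J, ‖G a u‖) + ∫ u in J, ‖G t u - G a u‖ := integral_add (hGi a ha).norm hsub
    _ ≤ _ := by gcongr; exact setIntegral_norm_sub_le_sSup_l1VarSums hBV ha ht

theorem setIntegral_norm_le_iSup (hBV : BddAbove (l1VarSums G I J))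
    (hGi : ∀ t ∈ I, IntegrableOn (G t) J) (ht : t ∈ I) :
    ∫ u in J, ‖G t u‖ ≤ ⨆ t ∈ I, ∫ u in J, ‖G t u‖ :=
  le_ciSup_of_le (bddAbove_range_setIntegral_norm hBV hGi ht) t
    (ciSup_pos (f := fun _ ↦ ∫ u in J, ‖G t u‖) ht).ge

end BoundedVariation

section Solutions

variable {R : Type*} [NormedRing R] [NormedAlgebra ℝ R] {A X : ℝ → R} {I : Set ℝ} {s t : ℝ}

/-- `X` is a continuous solution of `X' = A X` on `I`, in the integrated sense. The
columns `X(·, s)` of an evolution operator are solutions in `R = End(E)`. -/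
def IsSolutionOn (I : Set ℝ) (A X : ℝ → R) : Prop :=
  ContinuousOn X I ∧ ∀ u ∈ I, ∀ t ∈ I, X t - X u = ∫ τ in u..t, A τ * X τ

theorem IsSolutionOn.isACPrimitive [CompleteSpace R] (hX : IsSolutionOn I A X)
    (hA : IntervalIntegrable A volume s t) (hst : uIcc s t ⊆ I) :
    IsACPrimitive X (A * X) s t :=
  .of_eq_add_integral (hA.mul_continuousOn (hX.1.mono hst)) fun x hx ↦
    eq_add_of_sub_eq' (hX.2 s (hst left_mem_uIcc) x (hst hx))

theorem IsSolutionOn.congr {B : ℝ → R} (hX : IsSolutionOn I A X) (hI : I.OrdConnected)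
    (hAB : EqOn A B I) : IsSolutionOn I B X :=
  ⟨hX.1, fun u hu t ht ↦ (hX.2 u hu t ht).trans <| integral_congr fun x hx ↦ by
    rw [hAB (hI.uIcc_subset hu ht hx)]⟩

end Solutions

theorem IsSolutionOn.expClose_norm {R : Type*} [NormedRing R] [NormedAlgebra ℝ R]
    [CompleteSpace R] {I J : Set ℝ} {G : ℝ → ℝ → R} {f f' : ℝ → ℝ} {X : ℝ → R} {V r s t : ℝ}
    (hX : IsSolutionOn I (fun x ↦ f' x • G x (f x)) X) (hI : I.OrdConnected)
    (hG : IsSupContinuousOn G I J) (hGm : ∀ t ∈ I, LocEssBdd (G t) J)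
    (hGi : ∀ t ∈ I, IntegrableOn (G t) J) (hV : ∀ v ∈ l1VarSums G I J, v ≤ V)
    (hr : ∀ t ∈ I, ∫ u in J, ‖G t u‖ ≤ r) (hfJ : MapsTo f I J)
    (hf : ∀ a ∈ I, ∀ b ∈ I, IsACPrimitive f f' a b) (hs : s ∈ I) (ht : t ∈ I) :
    ExpClose (2 * r + Real.exp (2 * r) * V) ‖X t‖ ‖X s‖ := by
  wlog hst : s ≤ t generalizing s t
  · exact (this ht hs (le_of_not_ge hst)).symm
  have hstI : uIcc s t ⊆ I := hI.uIcc_subset hs ht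
  have hXst := hX.isACPrimitive (intervalIntegrable_smul_comp hG hGm hstI (hf s hs t ht)
    (hfJ.mono_left hstI)) hstI
  obtain rfl | hst := hst.eq_or_lt
  · have hr0 : 0 ≤ r := (MeasureTheory.integral_nonneg fun _ ↦ norm_nonneg _).trans (hr s hs)
    have hV0 : 0 ≤ V := hV 0 ⟨0, fun _ ↦ s, fun _ _ ↦ hs, by simp, by simp⟩
    exact .of_nonneg (norm_nonneg _) (by positivity)
  · exact expClose_norm_solution_of_lt hI hG hGm hGi hV hr hfJ hs ht hst (hf s hs t ht) hXst

theorem IsEvolutionOperator.norm_le_of_growth {E : Type*} [NormedAddCommGroup E]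
    [NormedSpace ℝ E] {I : Set ℝ} {A : ℝ → E →L[ℝ] E} {X : ℝ → ℝ → E →L[ℝ] E} {C s t : ℝ}
    (hX : IsEvolutionOperator I A X) (hC : 0 ≤ C)
    (hgrowth : ∀ Y, IsSolutionOn I A Y → ∀ s ∈ I, ∀ t ∈ I, ‖Y t‖ ≤ C * ‖Y s‖)
    (hs : s ∈ I) (ht : t ∈ I) : ‖X t s‖ ≤ C :=
  (hgrowth _ ⟨(hX s hs).1, (hX s hs).2.2⟩ s hs t ht).trans <|
    mul_le_of_le_one_right hC ((hX s hs).2.1 ▸ ContinuousLinearMap.norm_id_le)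

theorem sq_mul_exp_le {N V : ℝ} (hN : 1 ≤ N) (hV : 0 ≤ V) :
    N ^ 2 * Real.exp (N ^ 2 * V) ≤ N ^ 2 * Real.exp (N ^ (3 + 2 * N) * V) := by
  have hpow : N ^ 2 ≤ N ^ (3 + 2 * N) := by
    rw [← Real.rpow_natCast]
    exact Real.rpow_le_rpow_of_exponent_le hN (by push_cast; linarith)
  gcongr

theorem stmt10_general {R : Type*} [NormedRing R] [NormedAlgebra ℝ R] [CompleteSpace R]
    (I J : Set ℝ) (hI : I.OrdConnected)
    (G : ℝ → ℝ → R)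
    (hGm : ∀ t ∈ I, LocEssBdd (G t) J)
    (hGi : ∀ t ∈ I, IntegrableOn (G t) J)
    (hGcont : ∀ t ∈ I, ∀ ε > (0 : ℝ), ∃ δ > (0 : ℝ), ∀ s ∈ I, |s - t| < δ →
      ∀ u ∈ J, ‖G s u - G t u‖ < ε)
    (hBV : BddAbove (l1VarSums G I J))
    (V N : ℝ)
    (hV : V = sSup (l1VarSums G I J))
    (hN : N = Real.exp (⨆ t ∈ I, ∫ u in J, ‖G t u‖))
    (f f' : ℝ → ℝ)
    (hf : LocallyAbsolutelyContinuousOn f I)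
    (hf' : IsDerivWithinOf f' f I)
    (hfJ : ∀ t ∈ I, f t ∈ J)
    (A : ℝ → R)
    (hA : ∀ t ∈ I, A t = f' t • G t (f t)) :
    (∀ a ∈ I, ∀ b ∈ I, IntervalIntegrable A volume a b) ∧
    ∀ X, IsSolutionOn I A X →
      ∀ s ∈ I, ∀ t ∈ I, ‖X t‖ ≤ N ^ 2 * Real.exp (N ^ 2 * V) * ‖X s‖ := by
  subst hV hN
  have hG := isSupContinuousOn_of_forall_exists hGcont
  have hfac : ∀ a ∈ I, ∀ b ∈ I, IsACPrimitive f f' a b := fun _ ha _ hb ↦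
    hf.isACPrimitive hI hf' ha hb
  refine ⟨fun a ha b hb ↦ ?_, fun X hX s hs t ht ↦ ?_⟩
  · have habI := hI.uIcc_subset ha hb
    exact (intervalIntegrable_smul_comp hG hGm habI (hfac a ha b hb)
      fun x hx ↦ hfJ x (habI hx)).congr fun x hx ↦ (hA x (habI (uIoc_subset_uIcc hx))).symm
  · have hclose := (hX.congr hI hA).expClose_norm hI hG hGm hGi (fun v hv ↦ le_csSup hBV hv)
      (fun τ hτ ↦ setIntegral_norm_le_iSup hBV hGi hτ) hfJ hfac hs ht
    refine hclose.1.trans_eq ?_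
    rw [Real.exp_add, two_mul, Real.exp_add, ← pow_two, mul_comm]

end

/-- main theorem. If `G : I → L^∞_loc(J;End E) ∩ L¹(J;End E)` is
continuous for the supremum distance and of bounded variation `V` in `L¹(J;End E)`, then
for every `f ∈ AC_loc(I)` with `f(I) ⊆ J` the system `A(t) = f'(t)·G(t)(f(t))` is locally
integrable and any evolution operator satisfies `‖X(t,s)^{±1}‖ ≤ N² exp(N^{3+2N} V)`. -/
theorem stmt10 {E : Type*} [NormedAddCommGroup E] [NormedSpace ℝ E] [CompleteSpace E]
    (I J : Set ℝ) (hI : I.OrdConnected) (hJ : J.OrdConnected)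
    (G : ℝ → ℝ → E →L[ℝ] E)
    (hGm : ∀ t ∈ I, LocEssBdd (G t) J)
    (hGi : ∀ t ∈ I, IntegrableOn (G t) J)
    (hGcont : ∀ t ∈ I, ∀ ε > (0 : ℝ), ∃ δ > (0 : ℝ), ∀ s ∈ I, |s - t| < δ →
      ∀ u ∈ J, ‖G s u - G t u‖ < ε)
    (hBV : BddAbove (l1VarSums G I J))
    (V N : ℝ)
    (hV : V = sSup (l1VarSums G I J))
    (hN : N = Real.exp (⨆ t ∈ I, ∫ u in J, ‖G t u‖))
    (f f' : ℝ → ℝ)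
    (hf : LocallyAbsolutelyContinuousOn f I)
    (hf' : IsDerivWithinOf f' f I)
    (hfJ : ∀ t ∈ I, f t ∈ J)
    (A : ℝ → E →L[ℝ] E)
    (hA : ∀ t ∈ I, A t = f' t • G t (f t)) :
    (∀ a ∈ I, ∀ b ∈ I, IntervalIntegrable A volume a b) ∧
    ∀ X, IsEvolutionOperator I A X →
      ∀ s ∈ I, ∀ t ∈ I, s ≤ t →
        ‖X t s‖ ≤ N ^ 2 * Real.exp (N ^ (3 + 2 * N) * V) ∧
        ‖X s t‖ ≤ N ^ 2 * Real.exp (N ^ (3 + 2 * N) * V) := by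
  obtain ⟨hint, hgrowth⟩ :=
    stmt10_general I J hI G hGm hGi hGcont hBV V N hV hN f f' hf hf' hfJ A hA
  have hC := sq_mul_exp_le (hN ▸ Real.one_le_exp iSup_setIntegral_norm_nonneg)
    (hV ▸ sSup_l1VarSums_nonneg)
  exact ⟨hint, fun X hX s hs t ht _ ↦
    ⟨(hX.norm_le_of_growth (by positivity) hgrowth hs ht).trans hC,
      (hX.norm_le_of_growth (by positivity) hgrowth ht hs).trans hC⟩⟩
end

section
/- Let M, J ⊆ ℝ be open intervals with 0 ∈ M and [−1, 1] ⊆ J, let E be the trivial rank-r vector bundle over M × J with a smooth linear connection ∇, let a ∈ M with a < 0, and let γ : [a, 0) → ℝ² be γ(t) = (t, sin(1/t)). Then there exists C > 0 such that for all b ∈ [a, 0) and all vectors v in the fiber over γ(a), (1/C)‖v‖ ≤ ‖P_{γ|[a,b]}(v)‖ ≤ C‖v‖, where P denotes parallel transport with respect to ∇. -/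
open MeasureTheory Set

/-!
Write the connection as `d + ω₁ dt + ω₂ dy`. The oscillation of the curve only enters through
`ω₂ dy`, which is removed by the change of frame `W(t, y)` solving `∂W/∂y = W ω₂`. In the new
frame the vector `f(t) = W(t, y(t)) x(t)` of a parallel section satisfies `f' = (∂W/∂t - W ω₁) x`,
where `y'` no longer appears, so Grönwall's inequality bounds `f` in both time directions,
uniformly in the function `y`. Only a Lipschitz bound in `t` is available for `W`, so `f` need not
be differentiable and Grönwall's inequality is applied to its difference quotients.
-/

open Filter Topology
open scoped NNReal

section Slope

variable {E : Type*} [NormedAddCommGroup E] {f : ℝ → E} {a b D : ℝ}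

/-- The differential inequality `‖f'‖ ≤ D ‖f‖` on `s`, stated through difference quotients so that
it makes sense for functions that are not differentiable. -/
def HasNormSlopeLe (f : ℝ → E) (D : ℝ) (s : Set ℝ) : Prop :=
  ∀ t ∈ s, ∀ r, D * ‖f t‖ < r → ∀ᶠ z in 𝓝[s] t, ‖z - t‖⁻¹ * ‖f z - f t‖ < r

lemma HasNormSlopeLe.of_hasDerivWithinAt [NormedSpace ℝ E] {f' : ℝ → E} {s : Set ℝ}
    (hf : ∀ t ∈ s, HasDerivWithinAt f (f' t) s t) (hf' : ∀ t ∈ s, ‖f' t‖ ≤ D * ‖f t‖) :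
    HasNormSlopeLe f D s :=
  fun t ht _ hr => (hf t ht).limsup_norm_slope_le ((hf' t ht).trans_lt hr)

lemma HasNormSlopeLe.continuousOn {s : Set ℝ} (hf : HasNormSlopeLe f D s) :
    ContinuousOn f s := by
  intro t ht
  have hO : (fun z => f z - f t) =O[𝓝[s] t] fun z => z - t := by
    refine .of_bound (D * ‖f t‖ + 1) ?_
    filter_upwards [hf t ht _ (lt_add_one _)] with z hz
    rcases eq_or_ne z t with rfl | hne
    · simp
    · have hpos : 0 < ‖z - t‖ := norm_pos_iff.2 (sub_ne_zero.2 hne)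
      rw [inv_mul_lt_iff₀ hpos, mul_comm] at hz
      exact hz.le
  have hlim : Tendsto (fun z => z - t) (𝓝[s] t) (𝓝 0) := by
    simpa only [sub_self] using
      ((continuous_sub_right t).tendsto t).mono_left nhdsWithin_le_nhds
  exact tendsto_sub_nhds_zero_iff.1 (hO.trans_tendsto hlim)

lemma HasNormSlopeLe.norm_le_mul_exp (hf : HasNormSlopeLe f D (Icc a b)) {t : ℝ}
    (ht : t ∈ Icc a b) : ‖f t‖ ≤ ‖f a‖ * Real.exp (D * (t - a)) := by
  rw [← gronwallBound_ε0]
  refine le_gronwallBound_of_liminf_deriv_right_le (f' := fun t => D * ‖f t‖)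
    hf.continuousOn.norm (fun s hs r hr => ?_) le_rfl (fun _ _ => (add_zero _).ge) t ht
  have hle : 𝓝[>] s ≤ 𝓝[Icc a b] s :=
    nhdsWithin_le_of_mem (mem_of_superset (Ioo_mem_nhdsGT hs.2)
      fun z hz => ⟨hs.1.trans hz.1.le, hz.2.le⟩)
  refine Eventually.frequently ?_
  filter_upwards [hle (hf s (Ico_subset_Icc_self hs) r hr), self_mem_nhdsWithin] with z hz hsz
  have hpos : 0 < z - s := sub_pos.2 hsz
  replace hz : ‖z - s‖⁻¹ * ‖f z - f s‖ < r := hz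
  rw [Real.norm_of_nonneg hpos.le] at hz
  exact (mul_le_mul_of_nonneg_left (norm_sub_norm_le _ _) (inv_nonneg.2 hpos.le)).trans_lt hz

lemma HasNormSlopeLe.comp_reflect (hf : HasNormSlopeLe f D (Icc a b)) :
    HasNormSlopeLe (fun t => f (a + b - t)) D (Icc a b) := by
  intro t ht r hr
  have hmaps : MapsTo (fun z => a + b - z) (Icc a b) (Icc a b) := fun z hz =>
    ⟨by linarith [hz.2], by linarith [hz.1]⟩
  have hlim : Tendsto (fun z => a + b - z) (𝓝[Icc a b] t) (𝓝[Icc a b] (a + b - t)) :=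
    (continuous_const.sub continuous_id).continuousWithinAt.tendsto_nhdsWithin hmaps
  filter_upwards [hlim.eventually (hf _ (hmaps ht) r hr)] with z hz
  rwa [sub_sub_sub_cancel_left, norm_sub_rev] at hz

lemma HasNormSlopeLe.norm_left_le_mul_exp (hab : a ≤ b) (hf : HasNormSlopeLe f D (Icc a b)) :
    ‖f a‖ ≤ ‖f b‖ * Real.exp (D * (b - a)) := by
  simpa using hf.comp_reflect.norm_le_mul_exp (right_mem_Icc.2 hab)

lemma eventually_norm_slope_diag_lt [NormedSpace ℝ E] {g : ℝ → ℝ → E} {g' : E} {h : ℝ → ℝ}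
    {s : Set ℝ} {t r : ℝ} (hg : HasDerivWithinAt (g t) g' s t)
    (hgh : ∀ z ∈ s, ‖z - t‖⁻¹ * ‖g z z - g t z‖ ≤ h z) (hh : ContinuousWithinAt h s t)
    (hr : h t + ‖g'‖ < r) :
    ∀ᶠ z in 𝓝[s] t, ‖z - t‖⁻¹ * ‖g z z - g t t‖ < r := by
  obtain ⟨r₁, hr₁, hr₁r⟩ := exists_between (lt_sub_iff_add_lt'.2 hr)
  filter_upwards [hg.limsup_norm_slope_le hr₁,
    hh.eventually (gt_mem_nhds (lt_sub_comm.1 hr₁r)), self_mem_nhdsWithin] with z hslope hhz hz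
  have hfirst : ‖z - t‖⁻¹ * ‖g z z - g t z‖ < r - r₁ := (hgh z hz).trans_lt hhz
  calc ‖z - t‖⁻¹ * ‖g z z - g t t‖
      ≤ ‖z - t‖⁻¹ * (‖g z z - g t z‖ + ‖g t z - g t t‖) := by
        gcongr
        exact norm_sub_le_norm_sub_add_norm_sub ..
    _ < r := by rw [mul_add]; linarith

end Slope

section LinearODE

variable {E : Type*} [NormedAddCommGroup E] [NormedSpace ℝ E]

/-- The retraction of a normed space onto the closed ball of radius `R`, used to turn a linear
vector field into a bounded one. -/
noncomputable def radialClip (R : ℝ) (x : E) : E := (R / max R ‖x‖) • x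

lemma radialClip_of_norm_le {R : ℝ} (hR : 0 < R) {x : E} (hx : ‖x‖ ≤ R) : radialClip R x = x := by
  rw [radialClip, max_eq_left hx, div_self hR.ne', one_smul]

lemma norm_radialClip_le_norm {R : ℝ} (hR : 0 < R) (x : E) : ‖radialClip R x‖ ≤ ‖x‖ := by
  rw [radialClip, norm_smul, Real.norm_of_nonneg (by positivity)]
  exact mul_le_of_le_one_left (norm_nonneg x) (div_le_one_of_le₀ (le_max_left _ _) (by positivity))

lemma norm_radialClip_le {R : ℝ} (hR : 0 < R) (x : E) : ‖radialClip R x‖ ≤ R := by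
  rw [radialClip, norm_smul, Real.norm_of_nonneg (by positivity), div_mul_eq_mul_div]
  exact div_le_of_le_mul₀ (by positivity) hR.le (by gcongr; exact le_max_right _ _)

lemma lipschitzWith_radialClip {R : ℝ} (hR : 0 < R) :
    LipschitzWith 2 (radialClip R : E → E) := by
  refine .of_dist_le_mul fun x y => ?_
  rw [dist_eq_norm, dist_eq_norm, NNReal.coe_ofNat, two_mul]
  set m := max R ‖x‖ with hm
  set n := max R ‖y‖ with hn
  have hm0 : 0 < m := hR.trans_le (le_max_left _ _)
  have hn0 : 0 < n := hR.trans_le (le_max_left _ _)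
  have hmn : |n - m| ≤ ‖x - y‖ := by
    rw [abs_sub_comm, hm, hn, max_comm R, max_comm R]
    exact (abs_max_sub_max_le_abs _ _ _).trans (abs_norm_sub_norm_le x y)
  have hscale : ‖(R / m - R / n) • y‖ ≤ ‖x - y‖ := by
    have hfac : R / m - R / n = R / m * ((n - m) / n) := by field_simp
    have hRm : R / m ≤ 1 := (div_le_one hm0).2 (le_max_left _ _)
    have hyn : ‖y‖ / n ≤ 1 := (div_le_one hn0).2 (le_max_right _ _)
    calc ‖(R / m - R / n) • y‖ = (R / m) * |n - m| * (‖y‖ / n) := by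
          rw [hfac, norm_smul, Real.norm_eq_abs, abs_mul, abs_div _ n, abs_of_pos hn0,
            abs_of_pos (div_pos hR hm0)]
          ring
      _ ≤ 1 * ‖x - y‖ * 1 := by gcongr
      _ = ‖x - y‖ := by ring
  calc ‖(R / m) • x - (R / n) • y‖ = ‖(R / m) • (x - y) + (R / m - R / n) • y‖ := by
        congr 1; module
    _ ≤ ‖(R / m) • (x - y)‖ + ‖(R / m - R / n) • y‖ := norm_add_le _ _
    _ ≤ ‖x - y‖ + ‖x - y‖ := by
        gcongr
        rw [norm_smul, Real.norm_of_nonneg (by positivity)]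
        exact mul_le_of_le_one_left (norm_nonneg _) ((div_le_one hm0).2 (le_max_left _ _))

lemma isPicardLindelof_clm_radialClip {T : ℝ → E →L[ℝ] E} {c d : ℝ} {K R : ℝ≥0} (hcd : c ≤ d)
    (hT : ContinuousOn T (Icc c d)) (hK : ∀ t ∈ Icc c d, ‖T t‖₊ ≤ K) (hR : 0 < R) (x₀ : E) :
    IsPicardLindelof (fun t x => T t (radialClip R x)) ⟨c, left_mem_Icc.2 hcd⟩ x₀
      (K * R * (d - c).toNNReal) 0 (K * R) (K * 2) where
  lipschitzOnWith t ht := (((T t).lipschitz.weaken (hK t ht)).comp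
    (lipschitzWith_radialClip (NNReal.coe_pos.2 hR))).lipschitzOnWith
  continuousOn _ _ := hT.clm_apply continuousOn_const
  norm_le t ht x _ :=
    (T t).le_of_opNorm_le_of_le (hK t ht) (norm_radialClip_le (NNReal.coe_pos.2 hR) x)
  mul_max_le := by simp [hcd]

theorem exists_isIntegralCurveOn_clm [CompleteSpace E] {T : ℝ → E →L[ℝ] E} {c d : ℝ}
    (hcd : c ≤ d) (hT : ContinuousOn T (Icc c d)) (x₀ : E) :
    ∃ u : ℝ → E, u c = x₀ ∧ IsIntegralCurveOn u (fun t => T t) (Icc c d) := by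
  obtain ⟨K, hK⟩ : ∃ K : ℝ≥0, ∀ t ∈ Icc c d, ‖T t‖₊ ≤ K := by
    obtain ⟨K, hK⟩ := isCompact_Icc.exists_bound_of_continuousOn hT
    exact ⟨K.toNNReal, fun t ht => (hK t ht).trans (Real.le_coe_toNNReal K)⟩
  -- By Grönwall's inequality a solution never leaves the ball of this radius.
  set R : ℝ≥0 := ‖x₀‖₊ * (Real.exp (K * (d - c))).toNNReal + 1 with hR
  have hRpos : 0 < R := by positivity
  obtain ⟨u, huc, hu⟩ :=
    (isPicardLindelof_clm_radialClip hcd hT hK hRpos x₀).exists_eq_forall_mem_Icc_hasDerivWithinAt₀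
  have hslope : HasNormSlopeLe u K (Icc c d) := .of_hasDerivWithinAt hu fun t ht =>
    (T t).le_of_opNorm_le_of_le (hK t ht) (norm_radialClip_le_norm (NNReal.coe_pos.2 hRpos) _)
  have hball : ∀ t ∈ Icc c d, ‖u t‖ ≤ R := fun t ht =>
    calc ‖u t‖ ≤ ‖x₀‖ * Real.exp (K * (t - c)) := huc ▸ hslope.norm_le_mul_exp ht
      _ ≤ ‖x₀‖ * Real.exp (K * (d - c)) := by gcongr; exact ht.2
      _ ≤ R := by simp [hR, Real.coe_toNNReal _ (Real.exp_nonneg _)]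
  refine ⟨u, huc, fun t ht => ?_⟩
  have hut := hu t ht
  rwa [radialClip_of_norm_le (NNReal.coe_pos.2 hRpos) (hball t ht)] at hut

end LinearODE

section TransportPair

variable {A : Type*} [NormedRing A] [NormedAlgebra ℝ A] {c d : ℝ}

/-- Parallel transport `V y` from `c` to `y ∈ [c, d]` for the connection `d + β dy` on an interval,
together with the frame change `W y` that trivializes this connection. -/
structure IsTransportPair (β V W : ℝ → A) (c d : ℝ) : Prop where
  transport_left : V c = 1
  frame_left : W c = 1
  transport_deriv : IsIntegralCurveOn V (fun y v => -β y * v) (Icc c d)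
  frame_deriv : IsIntegralCurveOn W (fun y w => w * β y) (Icc c d)

theorem exists_isTransportPair [CompleteSpace A] {β : ℝ → A} (hcd : c ≤ d)
    (hβ : ContinuousOn β (Icc c d)) : ∃ V W, IsTransportPair β V W c d := by
  obtain ⟨V, hVc, hV⟩ := exists_isIntegralCurveOn_clm hcd
    ((ContinuousLinearMap.mul ℝ A).continuous.comp_continuousOn hβ.neg) 1
  obtain ⟨W, hWc, hW⟩ := exists_isIntegralCurveOn_clm hcd
    ((ContinuousLinearMap.mul ℝ A).flip.continuous.comp_continuousOn hβ) 1
  exact ⟨V, W, hVc, hWc, hV, hW⟩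

namespace IsTransportPair

variable {β V W β₁ V₁ W₁ β₂ V₂ W₂ : ℝ → A} {K B δ y : ℝ}

lemma transport_norm_le (h : IsTransportPair β V W c d) (hK : ∀ y ∈ Icc c d, ‖β y‖ ≤ K)
    (hy : y ∈ Icc c d) : ‖V y‖ ≤ ‖(1 : A)‖ * Real.exp (K * (d - c)) := by
  have hK0 : 0 ≤ K := (norm_nonneg _).trans (hK y hy)
  have hslope : HasNormSlopeLe V K (Icc c d) := .of_hasDerivWithinAt h.transport_deriv
    fun z hz => norm_mul_le_of_le (by simpa using hK z hz) le_rfl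
  refine (hslope.norm_le_mul_exp hy).trans ?_
  rw [h.transport_left]
  gcongr
  exact hy.2

lemma frame_norm_le (h : IsTransportPair β V W c d) (hK : ∀ y ∈ Icc c d, ‖β y‖ ≤ K)
    (hy : y ∈ Icc c d) : ‖W y‖ ≤ ‖(1 : A)‖ * Real.exp (K * (d - c)) := by
  have hK0 : 0 ≤ K := (norm_nonneg _).trans (hK y hy)
  have hslope : HasNormSlopeLe W K (Icc c d) := .of_hasDerivWithinAt h.frame_deriv
    fun z hz => (norm_mul_le_of_le le_rfl (hK z hz)).trans_eq (mul_comm _ _)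
  refine (hslope.norm_le_mul_exp hy).trans ?_
  rw [h.frame_left]
  gcongr
  exact hy.2

lemma transport_mul_frame (h : IsTransportPair β V W c d) (hK : ∀ y ∈ Icc c d, ‖β y‖ ≤ K)
    (hy : y ∈ Icc c d) : V y * W y = 1 := by
  have hderiv : ∀ z ∈ Icc c d, HasDerivWithinAt (fun y => V y * W y - 1)
      ((V z * W z - 1) * β z - β z * (V z * W z - 1)) (Icc c d) z := fun z hz =>
    (((h.transport_deriv z hz).mul (h.frame_deriv z hz)).sub_const 1).congr_deriv
      (by noncomm_ring)
  have hslope : HasNormSlopeLe (fun y => V y * W y - 1) (2 * K) (Icc c d) :=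
    .of_hasDerivWithinAt hderiv fun z hz =>
      calc _ ≤ ‖V z * W z - 1‖ * K + K * ‖V z * W z - 1‖ :=
            norm_sub_le_of_le (norm_mul_le_of_le le_rfl (hK z hz))
              (norm_mul_le_of_le (hK z hz) le_rfl)
        _ = 2 * K * ‖V z * W z - 1‖ := by ring
  have hzero := hslope.norm_le_mul_exp hy
  simpa [h.transport_left, h.frame_left, sub_eq_zero] using hzero

/-- Duhamel's principle: `(W₁ V₂)' = W₁ (β₁ - β₂) V₂`. -/
lemma norm_frame_mul_transport_sub_one_le (h₁ : IsTransportPair β₁ V₁ W₁ c d)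
    (h₂ : IsTransportPair β₂ V₂ W₂ c d) (hW₁ : ∀ y ∈ Icc c d, ‖W₁ y‖ ≤ B)
    (hV₂ : ∀ y ∈ Icc c d, ‖V₂ y‖ ≤ B) (hβ : ∀ y ∈ Icc c d, ‖β₁ y - β₂ y‖ ≤ δ)
    (hy : y ∈ Icc c d) : ‖W₁ y * V₂ y - 1‖ ≤ B * δ * B * (y - c) := by
  have hderiv : ∀ z ∈ Icc c d, HasDerivWithinAt (fun y => W₁ y * V₂ y)
      (W₁ z * (β₁ z - β₂ z) * V₂ z) (Icc c d) z := fun z hz =>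
    ((h₁.frame_deriv z hz).mul (h₂.transport_deriv z hz)).congr_deriv (by noncomm_ring)
  have hmean := norm_image_sub_le_of_norm_deriv_le_segment' hderiv (C := B * δ * B)
    (fun z hz => have hz := Ico_subset_Icc_self hz
      norm_mul_le_of_le (norm_mul_le_of_le (hW₁ z hz) (hβ z hz)) (hV₂ z hz)) y hy
  simpa only [h₁.frame_left, h₂.transport_left, mul_one] using hmean

lemma norm_frame_sub_frame_le (h₁ : IsTransportPair β₁ V₁ W₁ c d)
    (h₂ : IsTransportPair β₂ V₂ W₂ c d) (hK₁ : ∀ y ∈ Icc c d, ‖β₁ y‖ ≤ K)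
    (hK₂ : ∀ y ∈ Icc c d, ‖β₂ y‖ ≤ K) (hβ : ∀ y ∈ Icc c d, ‖β₁ y - β₂ y‖ ≤ δ)
    (hy : y ∈ Icc c d) :
    ‖W₁ y - W₂ y‖ ≤ (‖(1 : A)‖ * Real.exp (K * (d - c))) ^ 3 * (d - c) * δ := by
  set B := ‖(1 : A)‖ * Real.exp (K * (d - c))
  have hδ : 0 ≤ δ := (norm_nonneg _).trans (hβ y hy)
  have hW₂ : ‖W₂ y‖ ≤ B := h₂.frame_norm_le hK₂ hy
  calc ‖W₁ y - W₂ y‖ = ‖(W₁ y * V₂ y - 1) * W₂ y‖ := by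
        rw [sub_mul, mul_assoc, h₂.transport_mul_frame hK₂ hy, mul_one, one_mul]
    _ ≤ B * δ * B * (y - c) * B := norm_mul_le_of_le
        (norm_frame_mul_transport_sub_one_le h₁ h₂ (fun _ => h₁.frame_norm_le hK₁)
          (fun _ => h₂.transport_norm_le hK₂) hβ hy) hW₂
    _ ≤ B * δ * B * (d - c) * B := by gcongr; exact hy.2
    _ = B ^ 3 * (d - c) * δ := by ring

end IsTransportPair

end TransportPair

section VerticalGauge

variable {A : Type*} [NormedRing A] [NormedAlgebra ℝ A] {P : Type*} [PseudoMetricSpace P]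

/-- A family of frame changes `W p`, `p ∈ S`, each trivializing the connection `d + β p dy` on
`[c, d]`, which is bounded by `B` together with its left inverse `V` and `Λ`-Lipschitz in the
parameter. -/
structure IsVerticalGauge (β : P → ℝ → A) (S : Set P) (c d : ℝ) (B Λ : ℝ≥0)
    (V W : P → ℝ → A) : Prop where
  frame_deriv : ∀ p ∈ S, IsIntegralCurveOn (W p) (fun y w => w * β p y) (Icc c d)
  transport_mul_frame : ∀ p ∈ S, ∀ y ∈ Icc c d, V p y * W p y = 1
  norm_transport_le : ∀ p ∈ S, ∀ y ∈ Icc c d, ‖V p y‖ ≤ B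
  norm_frame_le : ∀ p ∈ S, ∀ y ∈ Icc c d, ‖W p y‖ ≤ B
  norm_frame_sub_le : ∀ p ∈ S, ∀ q ∈ S, ∀ y ∈ Icc c d, ‖W p y - W q y‖ ≤ Λ * dist p q

lemma IsVerticalGauge.mono {β : P → ℝ → A} {S S' : Set P} {c d : ℝ} {B Λ : ℝ≥0} {V W : P → ℝ → A}
    (h : IsVerticalGauge β S c d B Λ V W) (hS : S' ⊆ S) : IsVerticalGauge β S' c d B Λ V W where
  frame_deriv p hp := h.frame_deriv p (hS hp)
  transport_mul_frame p hp := h.transport_mul_frame p (hS hp)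
  norm_transport_le p hp := h.norm_transport_le p (hS hp)
  norm_frame_le p hp := h.norm_frame_le p (hS hp)
  norm_frame_sub_le p hp q hq := h.norm_frame_sub_le p (hS hp) q (hS hq)

theorem exists_isVerticalGauge [CompleteSpace A] {β : P → ℝ → A} {S : Set P} {c d : ℝ}
    {K : ℝ} {L : ℝ≥0} (hcd : c ≤ d) (hβ : ∀ p ∈ S, ContinuousOn (β p) (Icc c d))
    (hK : ∀ p ∈ S, ∀ y ∈ Icc c d, ‖β p y‖ ≤ K)
    (hL : ∀ y ∈ Icc c d, LipschitzOnWith L (fun p => β p y) S) :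
    ∃ B Λ V W, IsVerticalGauge β S c d B Λ V W := by
  have hpair : ∀ p ∈ S, ∃ V W, IsTransportPair (β p) V W c d := fun p hp =>
    exists_isTransportPair hcd (hβ p hp)
  choose! V W hVW using hpair
  let B : ℝ≥0 := ⟨‖(1 : A)‖ * Real.exp (K * (d - c)), by positivity⟩
  let Λ : ℝ≥0 := B ^ 3 * ⟨d - c, sub_nonneg.2 hcd⟩ * L
  refine ⟨B, Λ, V, W, fun p hp => (hVW p hp).frame_deriv,
    fun p hp y hy => (hVW p hp).transport_mul_frame (hK p hp) hy,
    fun p hp y hy => (hVW p hp).transport_norm_le (hK p hp) hy,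
    fun p hp y hy => (hVW p hp).frame_norm_le (hK p hp) hy, fun p hp q hq y hy => ?_⟩
  have hsub := (hVW p hp).norm_frame_sub_frame_le (hVW q hq) (hK p hp) (hK q hq)
    (fun z hz => (dist_eq_norm (β p z) (β q z)).ge.trans ((hL z hz).dist_le_mul p hp q hq)) hy
  exact hsub.trans_eq (mul_assoc _ _ _).symm

end VerticalGauge

section ParallelTransport

variable {F : Type*} [NormedAddCommGroup F] [NormedSpace ℝ F]

/-- The coefficient `ω₂` of the connection form `ω₁ dt + ω₂ dy`. -/
noncomputable def verticalPart (ω : ℝ × ℝ → ℝ × ℝ →L[ℝ] F →L[ℝ] F) (t y : ℝ) : F →L[ℝ] F :=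
  ω (t, y) (0, 1)

lemma norm_verticalPart_le (ω : ℝ × ℝ → ℝ × ℝ →L[ℝ] F →L[ℝ] F) (t y : ℝ) :
    ‖verticalPart ω t y‖ ≤ ‖ω (t, y)‖ :=
  (ω (t, y)).unit_le_opNorm _ (by simp [Prod.norm_def])

lemma apply_one_mk (φ : ℝ × ℝ →L[ℝ] F →L[ℝ] F) (y' : ℝ) :
    φ (1, y') = φ (1, 0) + y' • φ (0, 1) := by
  rw [← map_smul, ← map_add]
  simp

theorem exists_isVerticalGauge_verticalPart [CompleteSpace F]
    {ω : ℝ × ℝ → ℝ × ℝ →L[ℝ] F →L[ℝ] F} {S : Set ℝ} {c d K : ℝ} {L : ℝ≥0} (hcd : c ≤ d)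
    (hK : ∀ q ∈ S ×ˢ Icc c d, ‖ω q‖ ≤ K) (hL : LipschitzOnWith L ω (S ×ˢ Icc c d)) :
    ∃ B Λ V W, IsVerticalGauge (verticalPart ω) S c d B Λ V W := by
  refine exists_isVerticalGauge (L := L) hcd (fun t ht => ?_)
    (fun t ht y hy => (norm_verticalPart_le ω t y).trans (hK _ ⟨ht, hy⟩)) fun y hy => ?_
  · have hcont : ContinuousOn (fun y => ω (t, y)) (Icc c d) :=
      hL.continuousOn.comp (by fun_prop) fun y hy => ⟨ht, hy⟩
    exact hcont.clm_apply continuousOn_const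
  · refine .of_dist_le_mul fun t ht t' ht' => ?_
    calc dist (verticalPart ω t y) (verticalPart ω t' y)
        = ‖verticalPart (fun q => ω q - ω (t', q.2)) t y‖ := dist_eq_norm _ _
      _ ≤ dist (ω (t, y)) (ω (t', y)) :=
        (norm_verticalPart_le _ t y).trans (dist_eq_norm (ω (t, y)) (ω (t', y))).ge
      _ ≤ L * dist t t' := by simpa using hL.dist_le_mul (t, y) ⟨ht, hy⟩ (t', y) ⟨ht', hy⟩

lemma hasDerivWithinAt_frame_apply {w : ℝ → F →L[ℝ] F} {α β : F →L[ℝ] F} {Y : ℝ → ℝ} {x : ℝ → F}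
    {s u : Set ℝ} {t y' : ℝ} (hw : HasDerivWithinAt w (w (Y t) * β) u (Y t))
    (hY : HasDerivWithinAt Y y' s t) (hYu : MapsTo Y s u)
    (hx : HasDerivWithinAt x (-(α + y' • β) (x t)) s t) :
    HasDerivWithinAt (fun τ => w (Y τ) (x τ)) (-w (Y t) (α (x t))) s t := by
  refine ((hw.scomp t hY hYu).clm_apply hx).congr_deriv ?_
  simp

namespace IsVerticalGauge

variable {ω : ℝ × ℝ → ℝ × ℝ →L[ℝ] F →L[ℝ] F} {S : Set ℝ} {c d : ℝ} {B Λ K : ℝ≥0}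
  {V W : ℝ → ℝ → F →L[ℝ] F} {Y Y' : ℝ → ℝ} {x : ℝ → F}

lemma norm_le_mul_norm_frame_apply {β : ℝ → ℝ → F →L[ℝ] F} (h : IsVerticalGauge β S c d B Λ V W)
    {t y : ℝ} (ht : t ∈ S) (hy : y ∈ Icc c d) (v : F) : ‖v‖ ≤ B * ‖W t y v‖ :=
  calc ‖v‖ = ‖(V t y * W t y) v‖ := by
        rw [h.transport_mul_frame t ht y hy, one_apply_eq_self]
    _ ≤ B * ‖W t y v‖ := (V t y).le_of_opNorm_le (h.norm_transport_le t ht y hy) _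

lemma norm_le_of_norm_frame_apply_le {β : ℝ → ℝ → F →L[ℝ] F} (h : IsVerticalGauge β S c d B Λ V W)
    {t t' y y' e : ℝ} {v v' : F} (ht : t ∈ S) (ht' : t' ∈ S) (hy : y ∈ Icc c d)
    (hy' : y' ∈ Icc c d) (he : 0 ≤ e) (hvv' : ‖W t y v‖ ≤ ‖W t' y' v'‖ * e) :
    ‖v‖ ≤ B ^ 2 * e * ‖v'‖ :=
  calc ‖v‖ ≤ B * ‖W t y v‖ := h.norm_le_mul_norm_frame_apply ht hy v
    _ ≤ B * (‖W t' y' v'‖ * e) := by gcongr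
    _ ≤ B * (B * ‖v'‖ * e) := by
        gcongr
        exact (W t' y').le_of_opNorm_le (h.norm_frame_le t' ht' y' hy') v'
    _ = B ^ 2 * e * ‖v'‖ := by ring

lemma hasNormSlopeLe_frame_apply (h : IsVerticalGauge (verticalPart ω) S c d B Λ V W)
    (hK : ∀ q ∈ S ×ˢ Icc c d, ‖ω q‖ ≤ K) (hY : ∀ t ∈ S, HasDerivWithinAt Y (Y' t) S t)
    (hYcd : MapsTo Y S (Icc c d))
    (hx : IsIntegralCurveOn x (fun t v => -ω (t, Y t) (1, Y' t) v) S) :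
    HasNormSlopeLe (fun t => W t (Y t) (x t)) ((Λ + B * K) * B) S := by
  intro t ht r hr
  have hfrozen : HasDerivWithinAt (fun τ => W t (Y τ) (x τ))
      (-W t (Y t) (ω (t, Y t) (1, 0) (x t))) S t :=
    hasDerivWithinAt_frame_apply (h.frame_deriv t ht _ (hYcd ht)) (hY t ht) hYcd
      ((hx t ht).congr_deriv (congrArg (fun φ => -φ (x t)) (apply_one_mk _ _)))
  refine eventually_norm_slope_diag_lt (g := fun z τ => W z (Y τ) (x τ))
    (h := fun z => Λ * ‖x z‖) hfrozen (fun z hz => ?_)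
    ((hx t ht).continuousWithinAt.norm.const_mul _) (lt_of_le_of_lt ?_ hr)
  · refine inv_mul_le_of_le_mul₀ (norm_nonneg _) (by positivity) ?_
    calc ‖(W z (Y z) - W t (Y z)) (x z)‖ ≤ Λ * dist z t * ‖x z‖ :=
          ContinuousLinearMap.le_of_opNorm_le _ (h.norm_frame_sub_le z hz t ht _ (hYcd hz)) _
      _ = ‖z - t‖ * (Λ * ‖x z‖) := by rw [dist_eq_norm]; ring
  · have hhorizontal : ‖ω (t, Y t) (1, 0)‖ ≤ K :=
      ((ω (t, Y t)).unit_le_opNorm _ (by simp [Prod.norm_def])).trans (hK _ ⟨ht, hYcd ht⟩)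
    have hfrozen_norm : ‖-W t (Y t) (ω (t, Y t) (1, 0) (x t))‖ ≤ B * (K * ‖x t‖) := by
      rw [norm_neg]
      exact (W t (Y t)).le_of_opNorm_le_of_le (h.norm_frame_le t ht _ (hYcd ht))
        (ContinuousLinearMap.le_of_opNorm_le _ hhorizontal _)
    calc Λ * ‖x t‖ + ‖-W t (Y t) (ω (t, Y t) (1, 0) (x t))‖
        ≤ Λ * ‖x t‖ + B * (K * ‖x t‖) := by gcongr
      _ = (Λ + B * K) * ‖x t‖ := by ring
      _ ≤ (Λ + B * K) * (B * ‖W t (Y t) (x t)‖) := by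
          gcongr
          exact h.norm_le_mul_norm_frame_apply ht (hYcd ht) _
      _ = (Λ + B * K) * B * ‖W t (Y t) (x t)‖ := by ring

variable {a b : ℝ}

lemma norm_right_le (h : IsVerticalGauge (verticalPart ω) (Icc a b) c d B Λ V W) (hab : a ≤ b)
    (hK : ∀ q ∈ Icc a b ×ˢ Icc c d, ‖ω q‖ ≤ K)
    (hY : ∀ t ∈ Icc a b, HasDerivWithinAt Y (Y' t) (Icc a b) t)
    (hYcd : MapsTo Y (Icc a b) (Icc c d))
    (hx : IsIntegralCurveOn x (fun t v => -ω (t, Y t) (1, Y' t) v) (Icc a b)) :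
    ‖x b‖ ≤ B ^ 2 * Real.exp ((Λ + B * K) * B * (b - a)) * ‖x a‖ := by
  have hb : b ∈ Icc a b := right_mem_Icc.2 hab
  exact h.norm_le_of_norm_frame_apply_le hb (left_mem_Icc.2 hab) (hYcd hb)
    (hYcd (left_mem_Icc.2 hab)) (Real.exp_nonneg _)
    ((h.hasNormSlopeLe_frame_apply hK hY hYcd hx).norm_le_mul_exp hb)

lemma norm_left_le (h : IsVerticalGauge (verticalPart ω) (Icc a b) c d B Λ V W) (hab : a ≤ b)
    (hK : ∀ q ∈ Icc a b ×ˢ Icc c d, ‖ω q‖ ≤ K)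
    (hY : ∀ t ∈ Icc a b, HasDerivWithinAt Y (Y' t) (Icc a b) t)
    (hYcd : MapsTo Y (Icc a b) (Icc c d))
    (hx : IsIntegralCurveOn x (fun t v => -ω (t, Y t) (1, Y' t) v) (Icc a b)) :
    ‖x a‖ ≤ B ^ 2 * Real.exp ((Λ + B * K) * B * (b - a)) * ‖x b‖ := by
  have ha : a ∈ Icc a b := left_mem_Icc.2 hab
  exact h.norm_le_of_norm_frame_apply_le ha (right_mem_Icc.2 hab) (hYcd ha)
    (hYcd (right_mem_Icc.2 hab)) (Real.exp_nonneg _)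
    ((h.hasNormSlopeLe_frame_apply hK hY hYcd hx).norm_left_le_mul_exp hab)

end IsVerticalGauge

theorem exists_bound_of_isIntegralCurveOn [CompleteSpace F]
    {ω : ℝ × ℝ → ℝ × ℝ →L[ℝ] F →L[ℝ] F} {a s c d : ℝ} {L : ℝ≥0} (hcd : c ≤ d)
    (hω : LipschitzOnWith L ω (Icc a s ×ˢ Icc c d)) :
    ∃ C > (0 : ℝ), ∀ b ∈ Icc a s, ∀ (Y Y' : ℝ → ℝ) (x : ℝ → F),
      MapsTo Y (Icc a b) (Icc c d) →
      (∀ t ∈ Icc a b, HasDerivWithinAt Y (Y' t) (Icc a b) t) →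
      IsIntegralCurveOn x (fun t v => -ω (t, Y t) (1, Y' t) v) (Icc a b) →
      ‖x a‖ ≤ C * ‖x b‖ ∧ ‖x b‖ ≤ C * ‖x a‖ := by
  obtain ⟨K, hK⟩ : ∃ K : ℝ≥0, ∀ q ∈ Icc a s ×ˢ Icc c d, ‖ω q‖ ≤ K := by
    obtain ⟨K, hK⟩ := (isCompact_Icc.prod isCompact_Icc).exists_bound_of_continuousOn
      (E := ℝ × ℝ →L[ℝ] F →L[ℝ] F) hω.continuousOn
    exact ⟨K.toNNReal, fun q hq => (hK q hq).trans (Real.le_coe_toNNReal K)⟩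
  obtain ⟨B, Λ, V, W, hVW⟩ := exists_isVerticalGauge_verticalPart hcd hK hω
  refine ⟨B ^ 2 * Real.exp ((Λ + B * K) * B * (s - a)) + 1, by positivity,
    fun b hb Y Y' x hYcd hY hx => ?_⟩
  have hsub : Icc a b ⊆ Icc a s := Icc_subset_Icc_right hb.2
  have hK' : ∀ q ∈ Icc a b ×ˢ Icc c d, ‖ω q‖ ≤ K := fun q hq => hK q (prod_mono_left hsub hq)
  have hC : B ^ 2 * Real.exp ((Λ + B * K) * B * (b - a)) ≤
      B ^ 2 * Real.exp ((Λ + B * K) * B * (s - a)) + 1 := by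
    have hexp : Real.exp ((Λ + B * K) * B * (b - a)) ≤ Real.exp ((Λ + B * K) * B * (s - a)) := by
      gcongr
      exact hb.2
    exact (mul_le_mul_of_nonneg_left hexp (by positivity)).trans (le_add_of_nonneg_right one_pos.le)
  exact ⟨((hVW.mono hsub).norm_left_le hb.1 hK' hY hYcd hx).trans (by gcongr),
    ((hVW.mono hsub).norm_right_le hb.1 hK' hY hYcd hx).trans (by gcongr)⟩

theorem stmt18_general [CompleteSpace F] {ω : ℝ × ℝ → ℝ × ℝ →L[ℝ] F →L[ℝ] F} {a s c d : ℝ}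
    {L : ℝ≥0} (hcd : c ≤ d) (hω : LipschitzOnWith L ω (Icc a s ×ˢ Icc c d)) :
    ∃ C > (0 : ℝ), ∀ b ∈ Icc a s, ∀ Y Y' : ℝ → ℝ, MapsTo Y (Icc a b) (Icc c d) →
      (∀ t ∈ Icc a b, HasDerivWithinAt Y (Y' t) (Icc a b) t) →
      ∀ X : ℝ → F →L[ℝ] F, X a = ContinuousLinearMap.id ℝ F →
        (∀ t ∈ Icc a b, HasDerivWithinAt X (-((ω (t, Y t)) (1, Y' t)).comp (X t)) (Icc a b) t) →
        ∀ v : F, (1 / C) * ‖v‖ ≤ ‖X b v‖ ∧ ‖X b v‖ ≤ C * ‖v‖ := by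
  obtain ⟨C, hC, hbound⟩ := exists_bound_of_isIntegralCurveOn hcd hω
  refine ⟨C, hC, fun b hb Y Y' hYcd hY X hXa hX v => ?_⟩
  have hXv : IsIntegralCurveOn (fun t => X t v) (fun t v => -ω (t, Y t) (1, Y' t) v) (Icc a b) :=
    fun t ht => ((hX t ht).clm_apply (hasDerivWithinAt_const _ _ v)).congr_deriv (by simp)
  obtain ⟨hleft, hright⟩ := hbound b hb Y Y' _ hYcd hY hXv
  simp only [hXa, ContinuousLinearMap.id_apply] at hleft hright
  exact ⟨by rwa [one_div, inv_mul_le_iff₀ hC], hright⟩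

end ParallelTransport

lemma hasDerivAt_sin_one_div {t : ℝ} (ht : t ≠ 0) :
    HasDerivAt (fun t => Real.sin (1 / t)) (-(Real.cos (1 / t)) / t ^ 2) t := by
  simp only [one_div]
  exact (hasDerivAt_inv ht).sin.congr_deriv (by ring)

/-- Parallel transport along the topologist's sine curve
`γ(t) = (t, sin(1/t))`, `t ∈ [a, 0)`, in the trivial rank-`r` bundle over `M × J` with a
smooth connection (given by its connection form `ω`), is uniformly bounded above and
below. Parallel transport along `γ|[a,b]` is given by the solution `X` of
`X'(t) = −ω(γ(t))(γ'(t)) ∘ X(t)`, `X(a) = id`. -/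
theorem stmt18 (M J : Set ℝ) (hMo : IsOpen M) (hMc : M.OrdConnected)
    (hJo : IsOpen J) (hJc : J.OrdConnected)
    (h0M : (0 : ℝ) ∈ M) (hJ1 : Set.Icc (-1 : ℝ) 1 ⊆ J)
    (r : ℕ)
    (ω : ℝ × ℝ → (ℝ × ℝ) →L[ℝ] ((Fin r → ℝ) →L[ℝ] (Fin r → ℝ)))
    (hω : ContDiffOn ℝ (⊤ : ℕ∞) ω (M ×ˢ J))
    (a : ℝ) (haM : a ∈ M) (ha0 : a < 0) :
    ∃ C > (0 : ℝ), ∀ b ∈ Set.Ico a (0 : ℝ),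
      ∀ X : ℝ → (Fin r → ℝ) →L[ℝ] (Fin r → ℝ),
        X a = ContinuousLinearMap.id ℝ (Fin r → ℝ) →
        (∀ t ∈ Set.Icc a b,
          HasDerivWithinAt X
            (-((ω (t, Real.sin (1 / t))) (1, -(Real.cos (1 / t)) / t ^ 2)).comp (X t))
            (Set.Icc a b) t) →
        ∀ v : Fin r → ℝ, (1 / C) * ‖v‖ ≤ ‖X b v‖ ∧ ‖X b v‖ ≤ C * ‖v‖ := by
  obtain ⟨L, hL⟩ := (hω.mono (prod_mono (hMc.out haM h0M) hJ1)).exists_lipschitzOnWith (by simp)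
    ((convex_Icc _ _).prod (convex_Icc _ _)) (isCompact_Icc.prod isCompact_Icc)
  obtain ⟨C, hC, hbound⟩ := stmt18_general (by norm_num) hL
  exact ⟨C, hC, fun b hb => hbound b (Ico_subset_Icc_self hb) _ _
    (fun t _ => Real.sin_mem_Icc _) fun t ht =>
      (hasDerivAt_sin_one_div (ht.2.trans_lt hb.2).ne).hasDerivWithinAt⟩
end
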